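/- Let (V,E,Ψ) be a strongly connected planar box-like self-affine GIFS satisfying the ROSC in which every T_e is diagonal, with positive weights (p_e) and graph-directed measure family (μ_v)_{v∈V}. Let q≥0 and suppose max{γ_A(q),γ_B(q)} ≤ t(q). Then for every v∈V the L^q-spectrum τ_{μ_v}(q) exists and equals max{γ_A(q),γ_B(q)}, which moreover equals the maximum of x+y over pairs (x,y)∈ℝ² with ρ(F^{(q)}_{x,y})=1 and γ_B(q)−τ_B(q) ≤ x ≤ τ_A(q), and also equals the maximum of x+y over pairs (x,y)∈ℝ² with ρ(F^{(q)}_{x,y})=1 and γ_A(q)−τ_A(q) ≤ y ≤ τ_B(q). -/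

import Mathlib

open MeasureTheory Filter Set
open scoped Classical

noncomputable section

namespace LqGIFS

/-! ### Mesh cubes, moment sums, L^q spectra, box dimension -/

/-- Closed cube of the `δ`-mesh of `ℝ`. -/
def meshCube1 (δ : ℝ) (k : ℤ) : Set ℝ := Set.Icc ((k : ℝ) * δ) (((k : ℝ) + 1) * δ)

/-- Closed cube of the `δ`-mesh of `ℝ²`. -/
def meshCube2 (δ : ℝ) (k : ℤ × ℤ) : Set (ℝ × ℝ) :=
  (Set.Icc ((k.1 : ℝ) * δ) (((k.1 : ℝ) + 1) * δ)) ×ˢ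
    (Set.Icc ((k.2 : ℝ) * δ) (((k.2 : ℝ) + 1) * δ))

/-- The moment sum `D_δ^q(ν)` for a measure on `ℝ` (cubes of zero measure are omitted,
so that at `q = 0` this counts the mesh cubes of positive measure). -/
def Dq1 (ν : Measure ℝ) (δ q : ℝ) : ℝ :=
  ∑' k : ℤ, if ν (meshCube1 δ k) = 0 then 0 else (ν (meshCube1 δ k)).toReal ^ q

/-- The moment sum `D_δ^q(ν)` for a measure on `ℝ²`. -/
def Dq2 (ν : Measure (ℝ × ℝ)) (δ q : ℝ) : ℝ :=
  ∑' k : ℤ × ℤ, if ν (meshCube2 δ k) = 0 then 0 else (ν (meshCube2 δ k)).toReal ^ q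

/-- The `L^q`-spectrum of a measure on `ℝ` exists and equals `s` (i.e. upper and lower
`L^q`-spectra coincide and equal `s`). -/
def HasLq1 (ν : Measure ℝ) (q s : ℝ) : Prop :=
  Tendsto (fun δ : ℝ => Real.log (Dq1 ν δ q) / (-Real.log δ))
    (nhdsWithin 0 (Set.Ioi 0)) (nhds s)

/-- The `L^q`-spectrum of a measure on `ℝ²` exists and equals `s`. -/
def HasLq2 (ν : Measure (ℝ × ℝ)) (q s : ℝ) : Prop :=
  Tendsto (fun δ : ℝ => Real.log (Dq2 ν δ q) / (-Real.log δ))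
    (nhdsWithin 0 (Set.Ioi 0)) (nhds s)

/-- Number of closed `δ`-mesh cubes of `ℝ²` meeting `X`. -/
def boxCount (X : Set (ℝ × ℝ)) (δ : ℝ) : ℕ :=
  Set.ncard {k : ℤ × ℤ | (X ∩ meshCube2 δ k).Nonempty}

/-- The box dimension of `X` exists and equals `d`. -/
def HasBoxDim (X : Set (ℝ × ℝ)) (d : ℝ) : Prop :=
  Tendsto (fun δ : ℝ => Real.log (boxCount X δ) / (-Real.log δ))
    (nhdsWithin 0 (Set.Ioi 0)) (nhds d)

/-! ### Matrices: 1-norm, spectral radius, permutation matrices -/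

/-- The 1-norm `‖A‖ = ∑_{i,j} |a_{ij}|` of a square matrix. -/
def mnorm {ι : Type*} [Fintype ι] (A : Matrix ι ι ℝ) : ℝ := ∑ i, ∑ j, |A i j|

/-- The spectral radius of a square real matrix, via the Gelfand formula. -/
def specRad {ι : Type*} [Fintype ι] [DecidableEq ι] (A : Matrix ι ι ℝ) : ℝ :=
  Filter.limsup (fun k : ℕ => (mnorm (A ^ k)) ^ ((k : ℝ)⁻¹)) Filter.atTop

/-- A square 0-1 matrix with exactly one 1 in each row and each column. -/
def IsPermMatrix {ι : Type*} (Z : Matrix ι ι ℝ) : Prop :=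
  (∀ i j, Z i j = 0 ∨ Z i j = 1) ∧ (∀ i, ∃! j, Z i j = 1) ∧ (∀ j, ∃! i, Z i j = 1)

/-! ### Directed graphs -/

/-- Strong connectivity of the finite directed graph with edge set `E`,
initial vertex map `ini` and terminal vertex map `ter`. -/
def GraphSC {V E : Type*} (ini ter : E → V) : Prop :=
  ∀ v v' : V, Relation.TransGen (fun u u' : V => ∃ e, ini e = u ∧ ter e = u') v v'

/-- The matrix `F^{(q)}_{x,y}` with entry `p_{e'}^q a_{e'}^x b_{e'}^y` at `(e,e')` when
`t(e) = i(e')`, and `0` otherwise. -/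
def FmatG {V E : Type*} (ini ter : E → V) (p a b : E → ℝ) (q x y : ℝ) :
    Matrix E E ℝ :=
  fun e e' => if ter e = ini e' then p e' ^ q * a e' ^ x * b e' ^ y else 0

/-- `f` is the entrywise product of the normalized left and right Perron vectors of the
irreducible matrix `F^{(q)}_{x,y(x)}` (spectral radius 1). -/
def IsPerronData {V E : Type*} [Fintype E] [DecidableEq E] (ini ter : E → V)
    (p a b : E → ℝ) (q x yx : ℝ) (f : E → ℝ) : Prop :=
  specRad (FmatG ini ter p a b q x yx) = 1 ∧
  ∃ u v : E → ℝ, (∀ e, 0 < u e) ∧ (∀ e, 0 < v e) ∧ (∑ e, u e) = 1 ∧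
    (FmatG ini ter p a b q x yx).mulVec u = u ∧
    (FmatG ini ter p a b q x yx).vecMul v = v ∧
    (∑ e, v e * u e) = 1 ∧ (∀ e, f e = v e * u e)

/-! ### Planar box-like graph-directed self-affine systems -/

/-- A planar box-like self-affine GIFS: a finite directed graph together with, for each
edge `e`, a contraction `ψ_e(z) = T_e z + t_e` whose linear part is the diagonal matrix
`diag(±a_e, ±b_e)` (when `diag e = true`) or the anti-diagonal matrix with entries
`±a_e` (top right) and `±b_e` (bottom left) (when `diag e = false`), `0 < a_e, b_e < 1`. -/
structure BoxLikeGIFS (V E : Type*) where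
  init : E → V
  term : E → V
  a : E → ℝ
  b : E → ℝ
  sa : E → ℝ
  sb : E → ℝ
  diag : E → Bool
  trans : E → ℝ × ℝ
  a_mem : ∀ e, a e ∈ Set.Ioo (0 : ℝ) 1
  b_mem : ∀ e, b e ∈ Set.Ioo (0 : ℝ) 1
  sa_mem : ∀ e, sa e = 1 ∨ sa e = -1
  sb_mem : ∀ e, sb e = 1 ∨ sb e = -1
  edge_exists : ∀ v, ∃ e, init e = v

namespace BoxLikeGIFS

variable {V E : Type*}

/-- The contraction `ψ_e`. -/
def map (S : BoxLikeGIFS V E) (e : E) : ℝ × ℝ → ℝ × ℝ := fun z =>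
  if S.diag e then
    (S.sa e * S.a e * z.1 + (S.trans e).1, S.sb e * S.b e * z.2 + (S.trans e).2)
  else
    (S.sa e * S.a e * z.2 + (S.trans e).1, S.sb e * S.b e * z.1 + (S.trans e).2)

def StronglyConnected (S : BoxLikeGIFS V E) : Prop := GraphSC S.init S.term

/-- The open unit square `(0,1)²`. -/
def unitSq : Set (ℝ × ℝ) := Set.Ioo (0 : ℝ) 1 ×ˢ Set.Ioo (0 : ℝ) 1

/-- The rectangular open set condition. -/
def ROSC (S : BoxLikeGIFS V E) : Prop :=
  (∀ e : E, S.map e '' unitSq ⊆ unitSq) ∧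
  ∀ e e' : E, e ≠ e' → S.init e = S.init e' →
    Disjoint (S.map e '' unitSq) (S.map e' '' unitSq)

/-- Positive weights summing to one at each vertex. -/
def IsWeights [Fintype E] (S : BoxLikeGIFS V E) (p : E → ℝ) : Prop :=
  (∀ e, 0 < p e) ∧ ∀ v : V, (∑ e : E, if S.init e = v then p e else 0) = 1

/-- `μ` is the associated graph-directed box-like self-affine measure family. -/
def IsGDMeasure [Fintype E] (S : BoxLikeGIFS V E) (p : E → ℝ)
    (μ : V → Measure (ℝ × ℝ)) : Prop :=
  (∀ v, IsProbabilityMeasure (μ v)) ∧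
  ∀ v : V, μ v =
    ∑ e : E, if S.init e = v then
      ENNReal.ofReal (p e) • ((μ (S.term e)).map (S.map e)) else (0 : Measure (ℝ × ℝ))

/-- `X` is the associated graph-directed self-affine carpet family. -/
def IsGDAttractor (S : BoxLikeGIFS V E) (X : V → Set (ℝ × ℝ)) : Prop :=
  (∀ v, (X v).Nonempty ∧ IsCompact (X v)) ∧
  ∀ v : V, X v = ⋃ e : E, ⋃ _ : S.init e = v, S.map e '' X (S.term e)

/-- The matrix `F^{(q)}_{x,y}` of the system. -/
def Fmat (S : BoxLikeGIFS V E) (p : E → ℝ) (q x y : ℝ) : Matrix E E ℝ :=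
  FmatG S.init S.term p S.a S.b q x y

/-- The `(2#E) × (2#E)` block matrix `𝒢^{(q)}_{x,y}`, indexed by `E × Bool`
(`false` = first index of the block, `true` = second). -/
def Gmat (S : BoxLikeGIFS V E) (p : E → ℝ) (τx τy : V → ℝ) (q x y : ℝ) :
    Matrix (E × Bool) (E × Bool) ℝ := fun i j =>
  if S.term i.1 = S.init j.1 then
    if S.diag j.1 then
      if i.2 = false ∧ j.2 = false then
        p j.1 ^ q * S.a j.1 ^ (x + τx (S.term j.1)) * S.b j.1 ^ (y - τx (S.term j.1))
      else if i.2 = true ∧ j.2 = true then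
        p j.1 ^ q * S.b j.1 ^ (x + τy (S.term j.1)) * S.a j.1 ^ (y - τy (S.term j.1))
      else 0
    else
      if i.2 = false ∧ j.2 = true then
        p j.1 ^ q * S.a j.1 ^ (x + τy (S.term j.1)) * S.b j.1 ^ (y - τy (S.term j.1))
      else if i.2 = true ∧ j.2 = false then
        p j.1 ^ q * S.b j.1 ^ (x + τx (S.term j.1)) * S.a j.1 ^ (y - τx (S.term j.1))
      else 0
  else 0

/-! ### Words -/

/-- An admissible word: consecutive edges are composable. -/
def Admissible (S : BoxLikeGIFS V E) (w : List E) : Prop :=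
  List.Chain' (fun e e' => S.term e = S.init e') w

/-- `(c_w, d_w)`: width and height of the rectangle `ψ_w([0,1]²)`. -/
def wdims (S : BoxLikeGIFS V E) : List E → ℝ × ℝ
  | [] => (1, 1)
  | e :: w =>
      if S.diag e then (S.a e * (wdims S w).1, S.b e * (wdims S w).2)
      else (S.a e * (wdims S w).2, S.b e * (wdims S w).1)

/-- Whether `T_w` is diagonal (`true`) or anti-diagonal (`false`). -/
def wordDiag (S : BoxLikeGIFS V E) : List E → Bool
  | [] => true
  | e :: w => S.diag e == wordDiag S w

/-- The larger singular value `α₁(w) = max(c_w, d_w)` of `T_w`. -/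
def alpha1 (S : BoxLikeGIFS V E) (w : List E) : ℝ := max (S.wdims w).1 (S.wdims w).2

/-- The smaller singular value `α₂(w) = min(c_w, d_w)` of `T_w`. -/
def alpha2 (S : BoxLikeGIFS V E) (w : List E) : ℝ := min (S.wdims w).1 (S.wdims w).2

/-- Initial vertex of a (nonempty) word. -/
def wordInit [Nonempty V] (S : BoxLikeGIFS V E) (w : List E) : V :=
  (w.head?.map S.init).getD (Classical.arbitrary V)

/-- Terminal vertex of a (nonempty) word. -/
def wordTerm [Nonempty V] (S : BoxLikeGIFS V E) (w : List E) : V :=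
  (w.getLast?.map S.term).getD (Classical.arbitrary V)

/-- `p_w = p_{w_1} ⋯ p_{w_k}`. -/
def wordProb (p : E → ℝ) (w : List E) : ℝ := (w.map p).prod

/-- `τ_w(q)`: given the values `τx v`, `τy v` of the `L^q`-spectra of the two coordinate
projections of `μ_v`, this is the `L^q`-spectrum of the projection of `μ_{t(w)} ∘ ψ_w⁻¹`
onto the longest side of `ψ_w([0,1]²)`, i.e. `τx (t w)` if `π_w = π_x` and `τy (t w)`
otherwise. -/
def wordTau [Nonempty V] (S : BoxLikeGIFS V E) (τx τy : V → ℝ) (w : List E) : ℝ :=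
  if ((S.wdims w).2 ≤ (S.wdims w).1 ↔ S.wordDiag w = true) then τx (S.wordTerm w)
  else τy (S.wordTerm w)

/-- The modified singular value function
`φ^{s,q}(w) = p_w^q α₁(w)^{τ_w(q)} α₂(w)^{s - τ_w(q)}`. -/
def msvf [Nonempty V] (S : BoxLikeGIFS V E) (p : E → ℝ) (τx τy : V → ℝ)
    (s q : ℝ) (w : List E) : ℝ :=
  wordProb p w ^ q * S.alpha1 w ^ (S.wordTau τx τy w) *
    S.alpha2 w ^ (s - S.wordTau τx τy w)

/-- The modified singular value function matrix `A_k^{s,q}`. -/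
def Amat [Nonempty V] [Fintype E] (S : BoxLikeGIFS V E) (p : E → ℝ) (τx τy : V → ℝ)
    (s q : ℝ) (k : ℕ) : Matrix V V ℝ := fun v v' =>
  ∑ f : Fin k → E,
    if S.Admissible (List.ofFn f) ∧ S.wordInit (List.ofFn f) = v ∧
        S.wordTerm (List.ofFn f) = v'
    then S.msvf p τx τy s q (List.ofFn f) else 0

/-- The family `E^*_δ` of admissible words whose shortest side drops below `δ`
exactly at the last letter. -/
def EstarDelta (S : BoxLikeGIFS V E) (δ : ℝ) : Set (List E) :=
  {w | w ≠ [] ∧ S.Admissible w ∧ S.alpha2 w < δ ∧ δ ≤ S.alpha2 w.dropLast}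

end BoxLikeGIFS

/-! ### Partition of the projections, for the splitting proposition -/

/-- The projection family: `(v, false) ↦ μ_v^x` and `(v, true) ↦ μ_v^y`. -/
def projMeas {V : Type*} (μ : V → Measure (ℝ × ℝ)) (i : V × Bool) : Measure ℝ :=
  if i.2 then (μ i.1).map Prod.snd else (μ i.1).map Prod.fst

/-- `A`, `B` is a partition of the projection family `{μ_v^x, μ_v^y}_v` into two disjoint
families of cardinality `#V`, on each of which the `L^q`-spectra exist and share a common
value, and which splits `{μ_v^x, μ_v^y}` for each `v`. -/
def GoodPartition {V : Type*} [Fintype V] (μ : V → Measure (ℝ × ℝ))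
    (A B : Finset (V × Bool)) : Prop :=
  Disjoint A B ∧ A ∪ B = Finset.univ ∧
  A.card = Fintype.card V ∧ B.card = Fintype.card V ∧
  ∃ τA τB : ℝ → ℝ,
    (∀ q : ℝ, 0 ≤ q → ∀ i ∈ A, HasLq1 (projMeas μ i) q (τA q)) ∧
    (∀ q : ℝ, 0 ≤ q → ∀ i ∈ B, HasLq1 (projMeas μ i) q (τB q)) ∧
    ∀ v : V, ((v, false) ∈ A ∧ (v, true) ∈ B) ∨ ((v, false) ∈ B ∧ (v, true) ∈ A)

end LqGIFS

end

open LqGIFS MeasureTheory Filter Set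

/-!
A cut set of words of height about `δ` tiles `μ v` by rectangles whose shorter side is comparable
to `δ`. Inside the rectangle of a word `w`, a `δ`-mesh cube sees only the projection along the
longer side, rescaled to the aspect ratio `δ / max c_w d_w`, so that up to constants `Dq2 (μ v) δ q`
is the sum of `p_w ^ q` times a one-dimensional moment sum. By the definition of `τA` and `τB`, the
latter is about `δ ^ (-(s + t)) * c_w ^ s * d_w ^ t` with `s = τA` when the rectangle is wide, and
with `t = τB` when it is tall.

Sub- and superinvariant vectors of `F_{x,y}` show that `∑ p_w ^ q * c_w ^ x * d_w ^ y` over a cut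
set is bounded above when `ρ(F_{x,y}) < 1` and bounded below when `ρ(F_{x,y}) > 1`. Adding the upper
estimates at the two points `(τA, γA - τA)` and `(γB - τB, τB)` of the curve `ρ(F_{x,y}) = 1` gives
the upper bound `max γA γB` for the growth of `Dq2`. For the lower bound, lowering an exponent only
decreases the powers of the aspect ratio, so any point of the curve with `x ≤ τA` and `y ≤ τB`
contributes `x + y`, and `max γA γB ≤ τA + τB` puts the better of the two points there.

The curve is the boundary of a convex set, because `(x, y) ↦ log ρ(F_{x,y})` is convex; between the
two points it lies below their chord, whence the two variational formulas.
-/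

namespace LqGIFS

/-! ### Moment sums -/

/-- The summand of a moment sum: `x ^ q`, except that null cells are omitted even at `q = 0`. -/
noncomputable def qpow (q x : ℝ) : ℝ := if x = 0 then 0 else x ^ q

section qpow

variable {q x y : ℝ}

lemma qpow_zero_right (q : ℝ) : qpow q 0 = 0 := if_pos rfl

lemma qpow_one_right (q : ℝ) : qpow q 1 = 1 := by simp [qpow]

lemma qpow_nonneg (hx : 0 ≤ x) : 0 ≤ qpow q x := by
  unfold qpow
  split_ifs
  · exact le_rfl
  · exact Real.rpow_nonneg hx q

lemma qpow_le_qpow (hq : 0 ≤ q) (hx : 0 ≤ x) (hxy : x ≤ y) : qpow q x ≤ qpow q y := by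
  rcases hx.eq_or_lt with rfl | hx'
  · rw [qpow_zero_right]
    exact qpow_nonneg hxy
  · simp only [qpow, hx'.ne', (hx'.trans_le hxy).ne', if_false]
    exact Real.rpow_le_rpow hx hxy hq

lemma qpow_mul (hx : 0 < x) (hy : 0 ≤ y) : qpow q (x * y) = x ^ q * qpow q y := by
  by_cases h : y = 0
  · simp [qpow, h]
  · simp [qpow, h, hx.ne', Real.mul_rpow hx.le hy]

variable {ι κ : Type*}

lemma qpow_le_mul_sum {J : Finset κ} {y : κ → ℝ} {M : ℝ} (hq : 0 ≤ q) (hx : 0 ≤ x)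
    (hy : ∀ j ∈ J, 0 ≤ y j) (hxy : x ≤ ∑ j ∈ J, y j) (hM : (J.card : ℝ) ≤ M) :
    qpow q x ≤ M ^ q * ∑ j ∈ J, qpow q (y j) := by
  rcases J.eq_empty_or_nonempty with rfl | hJ
  · have hx0 : x = 0 := le_antisymm (by simpa using hxy) hx
    simp [hx0, qpow_zero_right]
  obtain ⟨j, hj, hmax⟩ := J.exists_max_image y hJ
  have hM0 : 0 < M := lt_of_lt_of_le (by exact_mod_cast hJ.card_pos) hM
  have hxj : x ≤ M * y j :=
    calc x ≤ ∑ j ∈ J, y j := hxy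
      _ ≤ J.card • y j := Finset.sum_le_card_nsmul _ _ _ hmax
      _ = J.card * y j := nsmul_eq_mul _ _
      _ ≤ M * y j := mul_le_mul_of_nonneg_right hM (hy j hj)
  calc qpow q x ≤ qpow q (M * y j) := qpow_le_qpow hq hx hxj
    _ = M ^ q * qpow q (y j) := qpow_mul hM0 (hy j hj)
    _ ≤ M ^ q * ∑ j ∈ J, qpow q (y j) :=
      mul_le_mul_of_nonneg_left
        (Finset.single_le_sum (f := fun j => qpow q (y j)) (fun k hk => qpow_nonneg (hy k hk)) hj)
        (Real.rpow_nonneg hM0.le q)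

lemma sum_qpow_le_of_relation {I : Finset ι} {J : Finset κ} {x : ι → ℝ} {y : κ → ℝ}
    (R : ι → κ → Prop) {M M' : ℝ} (hq : 0 ≤ q) (hM0 : 0 ≤ M)
    (hx : ∀ i ∈ I, 0 ≤ x i) (hy : ∀ j ∈ J, 0 ≤ y j)
    (hxy : ∀ i ∈ I, x i ≤ ∑ j ∈ J with R i j, y j)
    (hM : ∀ i ∈ I, ((J.filter (R i)).card : ℝ) ≤ M)
    (hM' : ∀ j ∈ J, ((I.filter (R · j)).card : ℝ) ≤ M') :
    ∑ i ∈ I, qpow q (x i) ≤ M ^ q * M' * ∑ j ∈ J, qpow q (y j) :=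
  calc ∑ i ∈ I, qpow q (x i)
      ≤ ∑ i ∈ I, M ^ q * ∑ j ∈ J with R i j, qpow q (y j) :=
        Finset.sum_le_sum fun i hi => qpow_le_mul_sum hq (hx i hi)
          (fun j hj => hy j (Finset.mem_filter.1 hj).1) (hxy i hi) (hM i hi)
    _ = M ^ q * ∑ j ∈ J, (I.filter (R · j)).card * qpow q (y j) := by
        simp only [← Finset.mul_sum, Finset.sum_filter]
        rw [Finset.sum_comm]
        simp only [← Finset.sum_filter, Finset.sum_const, nsmul_eq_mul]
    _ ≤ M ^ q * ∑ j ∈ J, M' * qpow q (y j) := by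
        refine mul_le_mul_of_nonneg_left (Finset.sum_le_sum fun j hj => ?_)
          (Real.rpow_nonneg hM0 q)
        exact mul_le_mul_of_nonneg_right (hM' j hj) (qpow_nonneg (hy j hj))
    _ = M ^ q * M' * ∑ j ∈ J, qpow q (y j) := by rw [← Finset.mul_sum, mul_assoc]

lemma measure_ite_eq_qpow {X : Type*} [MeasurableSpace X] (ν : Measure X) [IsFiniteMeasure ν]
    (A : Set X) (q : ℝ) : (if ν A = 0 then 0 else (ν A).toReal ^ q) = qpow q (ν.real A) := by
  have h : ν.real A = 0 ↔ ν A = 0 := measureReal_eq_zero_iff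
  simp only [qpow, h]
  rfl

end qpow

/-- The indices of the `δ`-mesh intervals that meet the unit interval. -/
noncomputable def meshIndices (δ : ℝ) : Finset ℤ := Finset.Icc (-1) ⌊1 / δ⌋

/-- The closed unit square. -/
def closedSq : Set (ℝ × ℝ) := Icc (0 : ℝ) 1 ×ˢ Icc (0 : ℝ) 1

section mesh

variable {δ q x : ℝ} {k : ℤ}

lemma mem_meshCube1_floor (hδ : 0 < δ) (x : ℝ) : x ∈ meshCube1 δ ⌊x / δ⌋ :=
  ⟨(le_div_iff₀ hδ).1 (Int.floor_le _), ((div_lt_iff₀ hδ).1 (Int.lt_floor_add_one _)).le⟩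

lemma floor_div_mem_meshIndices (hδ : 0 < δ) (hx : x ∈ Icc (0 : ℝ) 1) :
    ⌊x / δ⌋ ∈ meshIndices δ :=
  Finset.mem_Icc.2 ⟨by have := Int.floor_nonneg.2 (div_nonneg hx.1 hδ.le); omega,
    Int.floor_le_floor (div_le_div_of_nonneg_right hx.2 hδ.le)⟩

lemma mem_meshIndices_of_mem_meshCube1 (hδ : 0 < δ) (hx : x ∈ Icc (0 : ℝ) 1)
    (hk : x ∈ meshCube1 δ k) : k ∈ meshIndices δ := by
  refine Finset.mem_Icc.2 ⟨?_, Int.le_floor.2 ((le_div_iff₀ hδ).2 (hk.1.trans hx.2))⟩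
  have : (0 : ℝ) ≤ (k : ℝ) + 1 := nonneg_of_mul_nonneg_left (hx.1.trans hk.2) hδ
  have : (0 : ℤ) ≤ k + 1 := by exact_mod_cast this
  omega

lemma card_meshIndices_le (hδ : 0 < δ) (hδ1 : δ ≤ 1) : ((meshIndices δ).card : ℝ) ≤ 3 / δ := by
  have hfloor : 0 ≤ ⌊1 / δ⌋ := Int.floor_nonneg.2 (by positivity)
  have hcard : ((meshIndices δ).card : ℤ) = ⌊1 / δ⌋ + 2 := by
    rw [meshIndices, Int.card_Icc, Int.toNat_of_nonneg] <;> omega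
  calc ((meshIndices δ).card : ℝ) = (⌊1 / δ⌋ : ℝ) + 2 := by exact_mod_cast hcard
    _ ≤ 1 / δ + 2 * (1 / δ) := by
      gcongr
      · exact Int.floor_le _
      · linarith [(one_le_div₀ hδ).2 hδ1]
    _ = 3 / δ := by ring

lemma Icc_subset_biUnion_meshCube1 (hδ : 0 < δ) :
    Icc (0 : ℝ) 1 ⊆ ⋃ k ∈ meshIndices δ, meshCube1 δ k := fun x hx =>
  mem_iUnion₂.2 ⟨_, floor_div_mem_meshIndices hδ hx, mem_meshCube1_floor hδ x⟩

lemma Dq1_eq_sum (ν : Measure ℝ) [IsFiniteMeasure ν] (hν : ν (Icc (0 : ℝ) 1)ᶜ = 0)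
    (hδ : 0 < δ) (q : ℝ) :
    Dq1 ν δ q = ∑ k ∈ meshIndices δ, qpow q (ν.real (meshCube1 δ k)) := by
  simp only [Dq1, measure_ite_eq_qpow]
  refine tsum_eq_sum fun k hk => ?_
  have hnull : ν (meshCube1 δ k) = 0 := measure_mono_null
    (fun x hx hx' => hk (mem_meshIndices_of_mem_meshCube1 hδ hx' hx)) hν
  rw [(measureReal_eq_zero_iff).2 hnull, qpow_zero_right]

lemma Dq2_eq_sum (ν : Measure (ℝ × ℝ)) [IsFiniteMeasure ν] (hν : ν closedSqᶜ = 0)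
    (hδ : 0 < δ) (q : ℝ) :
    Dq2 ν δ q = ∑ k ∈ meshIndices δ ×ˢ meshIndices δ, qpow q (ν.real (meshCube2 δ k)) := by
  simp only [Dq2, measure_ite_eq_qpow]
  refine tsum_eq_sum fun k hk => ?_
  have hsub : meshCube2 δ k ⊆ closedSqᶜ := fun x hx (hx' : x ∈ closedSq) =>
    hk (Finset.mem_product.2 ⟨mem_meshIndices_of_mem_meshCube1 hδ hx'.1 hx.1,
      mem_meshIndices_of_mem_meshCube1 hδ hx'.2 hx.2⟩)
  rw [(measureReal_eq_zero_iff).2 (measure_mono_null hsub hν), qpow_zero_right]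

variable (ν : Measure ℝ) [IsProbabilityMeasure ν]

lemma Dq1_le (hν : ν (Icc (0 : ℝ) 1)ᶜ = 0) (hq : 0 ≤ q) (hδ : 0 < δ) (hδ1 : δ ≤ 1) :
    Dq1 ν δ q ≤ 3 / δ := by
  rw [Dq1_eq_sum ν hν hδ]
  have hterm : ∀ k ∈ meshIndices δ, qpow q (ν.real (meshCube1 δ k)) ≤ 1 := fun k _ =>
    (qpow_le_qpow hq measureReal_nonneg measureReal_le_one).trans_eq (qpow_one_right q)
  calc ∑ k ∈ meshIndices δ, qpow q (ν.real (meshCube1 δ k))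
      ≤ (meshIndices δ).card • (1 : ℝ) := Finset.sum_le_card_nsmul _ _ _ hterm
    _ ≤ 3 / δ := by simpa using card_meshIndices_le hδ hδ1

lemma one_le_mul_Dq1 (hν : ν (Icc (0 : ℝ) 1)ᶜ = 0) (hq : 0 ≤ q) (hδ : 0 < δ) (hδ1 : δ ≤ 1) :
    1 ≤ (3 / δ) ^ q * Dq1 ν δ q := by
  rw [Dq1_eq_sum ν hν hδ]
  have hcover : (1 : ℝ) ≤ ∑ k ∈ meshIndices δ, ν.real (meshCube1 δ k) := by
    rw [prob_compl_eq_zero_iff measurableSet_Icc] at hν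
    calc (1 : ℝ) = ν.real (Icc (0 : ℝ) 1) := by simp [Measure.real, hν]
      _ ≤ ν.real (⋃ k ∈ meshIndices δ, meshCube1 δ k) :=
        measureReal_mono (Icc_subset_biUnion_meshCube1 hδ) (measure_ne_top _ _)
      _ ≤ _ := measureReal_biUnion_finset_le _ _
  simpa only [qpow_one_right] using qpow_le_mul_sum hq zero_le_one
    (fun _ _ => measureReal_nonneg) hcover (card_meshIndices_le hδ hδ1)

end mesh

/-! ### Growth exponents and power bounds -/

section growth

variable {s₀ s x : ℝ}

lemma rpow_abs_le_rpow (h0 : 0 < s₀) (hs : s₀ ≤ s) (h1 : s ≤ 1) : s₀ ^ |x| ≤ s ^ x :=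
  (Real.rpow_le_rpow h0.le hs (abs_nonneg x)).trans
    (Real.rpow_le_rpow_of_exponent_ge (h0.trans_le hs) h1 (le_abs_self x))

lemma rpow_le_rpow_neg_abs (h0 : 0 < s₀) (hs : s₀ ≤ s) (h1 : s ≤ 1) : s ^ x ≤ s₀ ^ (-|x|) := by
  rw [Real.rpow_neg h0.le,
    le_inv_comm₀ (Real.rpow_pos_of_pos (h0.trans_le hs) _) (Real.rpow_pos_of_pos h0 _),
    ← Real.rpow_neg (h0.trans_le hs).le, ← abs_neg]
  exact rpow_abs_le_rpow h0 hs h1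

lemma eventually_rpow_bounds_of_tendsto {f : ℝ → ℝ} {τ ε : ℝ}
    (hf : ∀ᶠ δ in nhdsWithin 0 (Ioi 0), 0 < f δ)
    (h : Tendsto (fun δ => Real.log (f δ) / (-Real.log δ)) (nhdsWithin 0 (Ioi 0)) (nhds τ))
    (hε : 0 < ε) :
    ∀ᶠ δ in nhdsWithin 0 (Ioi 0), δ ^ (-τ + ε) ≤ f δ ∧ f δ ≤ δ ^ (-τ - ε) := by
  filter_upwards [Metric.tendsto_nhds.1 h ε hε, hf, self_mem_nhdsWithin,
    mem_nhdsWithin_of_mem_nhds (Iio_mem_nhds one_pos)] with δ hdist hfδ hδ0 hδ1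
  have hδ0 : 0 < δ := hδ0
  have hlog : 0 < -Real.log δ := neg_pos.2 (Real.log_neg hδ0 hδ1)
  rw [Real.dist_eq, abs_lt, neg_lt_sub_iff_lt_add, sub_lt_iff_lt_add, div_lt_iff₀ hlog,
    ← sub_lt_iff_lt_add', lt_div_iff₀ hlog] at hdist
  rw [← Real.log_le_log_iff (Real.rpow_pos_of_pos hδ0 _) hfδ,
    ← Real.log_le_log_iff hfδ (Real.rpow_pos_of_pos hδ0 _), Real.log_rpow hδ0, Real.log_rpow hδ0]
  constructor <;> nlinarith [hdist.1, hdist.2]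

lemma tendsto_log_div_of_rpow_bounds {f : ℝ → ℝ} {γ : ℝ}
    (hlower : ∀ ε > 0, ∃ C > 0, ∀ δ ∈ Ioo (0 : ℝ) 1, δ ^ (-γ + ε) ≤ C * f δ)
    (hupper : ∀ ε > 0, ∃ C > 0, ∀ δ ∈ Ioo (0 : ℝ) 1, f δ ≤ C * δ ^ (-γ - ε)) :
    Tendsto (fun δ => Real.log (f δ) / (-Real.log δ)) (nhdsWithin 0 (Ioi 0)) (nhds γ) := by
  rw [Metric.tendsto_nhds]
  intro ε hε
  obtain ⟨C, hC, hlower⟩ := hlower (ε / 2) (half_pos hε)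
  obtain ⟨D, hD, hupper⟩ := hupper (ε / 2) (half_pos hε)
  have hlogtop : Tendsto (fun δ : ℝ => -Real.log δ) (nhdsWithin 0 (Ioi 0)) atTop :=
    tendsto_neg_atBot_atTop.comp Real.tendsto_log_nhdsGT_zero
  filter_upwards [hlogtop.eventually_gt_atTop 0,
    hlogtop.eventually_gt_atTop (2 * |Real.log C| / ε),
    hlogtop.eventually_gt_atTop (2 * |Real.log D| / ε),
    Ioo_mem_nhdsGT one_pos] with δ hlog hlogC hlogD hδ
  specialize hlower δ hδ
  specialize hupper δ hδ
  have hδ0 : 0 < δ := hδ.1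
  have hδpow : ∀ t : ℝ, 0 < δ ^ t := Real.rpow_pos_of_pos hδ0
  have hf : 0 < f δ := pos_of_mul_pos_right ((hδpow _).trans_le hlower) hC.le
  replace hlower := Real.log_le_log (hδpow _) hlower
  replace hupper := Real.log_le_log hf hupper
  rw [Real.log_rpow hδ0, Real.log_mul hC.ne' hf.ne'] at hlower
  rw [Real.log_mul hD.ne' (hδpow _).ne', Real.log_rpow hδ0] at hupper
  rw [div_lt_iff₀ hε] at hlogC hlogD
  rw [Real.dist_eq, abs_lt, neg_lt_sub_iff_lt_add, sub_lt_iff_lt_add, div_lt_iff₀ hlog,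
    ← sub_lt_iff_lt_add', lt_div_iff₀ hlog]
  constructor <;> nlinarith [le_abs_self (Real.log C), le_abs_self (Real.log D)]

end growth

section spectrum

variable {ν : Measure ℝ} [IsProbabilityMeasure ν] {q τ ε : ℝ}

lemma Dq1_pos (hν : ν (Icc (0 : ℝ) 1)ᶜ = 0) (hq : 0 ≤ q) {δ : ℝ} (hδ : 0 < δ) (hδ1 : δ ≤ 1) :
    0 < Dq1 ν δ q :=
  pos_of_mul_pos_right (zero_lt_one.trans_le (one_le_mul_Dq1 ν hν hq hδ hδ1)) (by positivity)

lemma eventually_Dq1_bounds_of_ge (hν : ν (Icc (0 : ℝ) 1)ᶜ = 0) (hq : 0 ≤ q) {s₀ : ℝ}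
    (h0 : 0 < s₀) (x y : ℝ) :
    ∀ᶠ C : ℝ in atTop, ∀ s ∈ Icc s₀ 1, s ^ x ≤ C * Dq1 ν s q ∧ Dq1 ν s q ≤ C * s ^ y := by
  filter_upwards [eventually_ge_atTop (s₀ ^ (-|x|) * (3 / s₀) ^ q),
    eventually_ge_atTop (3 / s₀ * s₀ ^ (-|y|))] with C hC₁ hC₂ s hs
  have hs0 : 0 < s := h0.trans_le hs.1
  have hscale : 3 / s ≤ 3 / s₀ := div_le_div_of_nonneg_left (by norm_num) h0 hs.1
  have hD : 0 < Dq1 ν s q := Dq1_pos hν hq hs0 hs.2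
  constructor
  · calc s ^ x ≤ s₀ ^ (-|x|) * 1 := by
          rw [mul_one]; exact rpow_le_rpow_neg_abs h0 hs.1 hs.2
      _ ≤ s₀ ^ (-|x|) * ((3 / s₀) ^ q * Dq1 ν s q) := by
          gcongr
          exact (one_le_mul_Dq1 ν hν hq hs0 hs.2).trans (by gcongr)
      _ ≤ C * Dq1 ν s q := by
          rw [← mul_assoc]; gcongr
  · calc Dq1 ν s q ≤ 3 / s₀ := (Dq1_le ν hν hq hs0 hs.2).trans hscale
      _ = 3 / s₀ * s₀ ^ (-|y|) * s₀ ^ |y| := by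
          rw [mul_assoc, ← Real.rpow_add h0, neg_add_cancel, Real.rpow_zero, mul_one]
      _ ≤ C * s ^ y := by
          gcongr
          · exact le_trans (by positivity) hC₂
          · exact rpow_abs_le_rpow h0 hs.1 hs.2

lemma HasLq1.eventually_bounds (h : HasLq1 ν q τ) (hν : ν (Icc (0 : ℝ) 1)ᶜ = 0) (hq : 0 ≤ q)
    (hε : 0 < ε) :
    ∀ᶠ C : ℝ in atTop, ∀ s ∈ Ioc (0 : ℝ) 1,
      s ^ (-τ + ε) ≤ C * Dq1 ν s q ∧ Dq1 ν s q ≤ C * s ^ (-τ - ε) := by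
  have hpos : ∀ᶠ s in nhdsWithin (0 : ℝ) (Ioi 0), 0 < Dq1 ν s q := by
    filter_upwards [Ioo_mem_nhdsGT one_pos] with s hs using Dq1_pos hν hq hs.1 hs.2.le
  obtain ⟨s₀, hs₀, hsmall⟩ := mem_nhdsGT_iff_exists_Ioo_subset.1
    (eventually_rpow_bounds_of_tendsto hpos h hε)
  filter_upwards [eventually_ge_atTop 1,
    eventually_Dq1_bounds_of_ge hν hq (mem_Ioi.1 hs₀) (-τ + ε) (-τ - ε)] with C hC1 hlarge s hs
  rcases lt_or_ge s s₀ with hlt | hge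
  · obtain ⟨hlower, hupper⟩ := hsmall ⟨hs.1, hlt⟩
    exact ⟨hlower.trans (le_mul_of_one_le_left (Dq1_pos hν hq hs.1 hs.2).le hC1),
      hupper.trans (le_mul_of_one_le_left (Real.rpow_nonneg hs.1.le _) hC1)⟩
  · exact hlarge s ⟨hge, hs.2⟩

end spectrum

/-! ### Spectral radii of nonnegative matrices -/

lemma sum_rpow_mul_rpow_le {ι : Type*} (s : Finset ι) {f g : ι → ℝ} (hf : ∀ i ∈ s, 0 ≤ f i)
    (hg : ∀ i ∈ s, 0 ≤ g i) {θ₀ θ₁ : ℝ} (h₀ : 0 ≤ θ₀) (h₁ : 0 ≤ θ₁) (hθ : θ₀ + θ₁ = 1) :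
    ∑ i ∈ s, f i ^ θ₀ * g i ^ θ₁ ≤ (∑ i ∈ s, f i) ^ θ₀ * (∑ i ∈ s, g i) ^ θ₁ := by
  rcases h₀.eq_or_lt with rfl | h₀
  · obtain rfl : θ₁ = 1 := by linarith
    simp
  rcases h₁.eq_or_lt with rfl | h₁
  · obtain rfl : θ₀ = 1 := by linarith
    simp
  have hHolder := Real.inner_le_Lp_mul_Lq_of_nonneg s (Real.HolderConjugate.inv_inv h₀ h₁ hθ)
    (fun i hi => Real.rpow_nonneg (hf i hi) θ₀) (fun i hi => Real.rpow_nonneg (hg i hi) θ₁)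
  rw [one_div, inv_inv, one_div, inv_inv] at hHolder
  rwa [Finset.sum_congr rfl fun i hi => Real.rpow_rpow_inv (hf i hi) h₀.ne',
    Finset.sum_congr rfl fun i hi => Real.rpow_rpow_inv (hg i hi) h₁.ne'] at hHolder

section mnorm

variable {ι : Type*} [Fintype ι]

lemma mnorm_nonneg (A : Matrix ι ι ℝ) : 0 ≤ mnorm A :=
  Finset.sum_nonneg fun _ _ => Finset.sum_nonneg fun _ _ => abs_nonneg _

lemma mnorm_eq_sum {A : Matrix ι ι ℝ} (hA : ∀ i j, 0 ≤ A i j) : mnorm A = ∑ i, ∑ j, A i j :=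
  Finset.sum_congr rfl fun _ _ => Finset.sum_congr rfl fun _ _ => abs_of_nonneg (hA _ _)

lemma sum_abs_le_mnorm (A : Matrix ι ι ℝ) (i : ι) : ∑ j, |A i j| ≤ mnorm A :=
  Finset.single_le_sum (f := fun i => ∑ j, |A i j|)
    (fun _ _ => Finset.sum_nonneg fun _ _ => abs_nonneg _) (Finset.mem_univ i)

lemma mnorm_mul_le (A B : Matrix ι ι ℝ) : mnorm (A * B) ≤ mnorm A * mnorm B :=
  calc mnorm (A * B) ≤ ∑ i, ∑ j, ∑ l, |A i l| * |B l j| :=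
        Finset.sum_le_sum fun i _ => Finset.sum_le_sum fun j _ => by
          simpa only [Matrix.mul_apply, abs_mul] using
            Finset.abs_sum_le_sum_abs (fun l => A i l * B l j) Finset.univ
    _ = ∑ i, ∑ l, |A i l| * ∑ j, |B l j| := by
        simp only [Finset.mul_sum]
        exact Finset.sum_congr rfl fun i _ => Finset.sum_comm
    _ ≤ ∑ i, ∑ l, |A i l| * mnorm B :=
        Finset.sum_le_sum fun i _ => Finset.sum_le_sum fun l _ =>
          mul_le_mul_of_nonneg_left (sum_abs_le_mnorm B l) (abs_nonneg _)
    _ = mnorm A * mnorm B := by simp only [mnorm, Finset.sum_mul]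

lemma mnorm_pow_le [DecidableEq ι] (A : Matrix ι ι ℝ) {k : ℕ} (hk : k ≠ 0) :
    mnorm (A ^ k) ≤ mnorm A ^ k := by
  induction k, Nat.one_le_iff_ne_zero.2 hk using Nat.le_induction with
  | base => simp
  | succ k hk ih =>
    rw [pow_succ, pow_succ]
    exact (mnorm_mul_le _ _).trans
      (mul_le_mul_of_nonneg_right (ih (by omega)) (mnorm_nonneg A))

lemma mnorm_le_of_le_mul_rpow {A B C : Matrix ι ι ℝ} (hA : ∀ i j, 0 ≤ A i j)
    (hB : ∀ i j, 0 ≤ B i j) (hC : ∀ i j, 0 ≤ C i j) {c θ₀ θ₁ : ℝ} (hc : 0 ≤ c) (h₀ : 0 ≤ θ₀)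
    (h₁ : 0 ≤ θ₁) (hθ : θ₀ + θ₁ = 1) (h : ∀ i j, C i j ≤ c * (A i j ^ θ₀ * B i j ^ θ₁)) :
    mnorm C ≤ c * (mnorm A ^ θ₀ * mnorm B ^ θ₁) := by
  have hsum : ∀ {D : Matrix ι ι ℝ}, (∀ i j, 0 ≤ D i j) → mnorm D = ∑ z : ι × ι, D z.1 z.2 :=
    fun {D} hD => (mnorm_eq_sum hD).trans (Fintype.sum_prod_type fun z => D z.1 z.2).symm
  rw [hsum hA, hsum hB, hsum hC]
  calc ∑ z : ι × ι, C z.1 z.2 ≤ ∑ z : ι × ι, c * (A z.1 z.2 ^ θ₀ * B z.1 z.2 ^ θ₁) :=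
        Finset.sum_le_sum fun z _ => h z.1 z.2
    _ ≤ _ := by
        rw [← Finset.mul_sum]
        exact mul_le_mul_of_nonneg_left (sum_rpow_mul_rpow_le _ (fun z _ => hA z.1 z.2)
          (fun z _ => hB z.1 z.2) h₀ h₁ hθ) hc

end mnorm

section specRad

variable {ι : Type*} [Fintype ι] [DecidableEq ι] {A B C : Matrix ι ι ℝ} {R : ℝ}

lemma isBoundedUnder_mnorm_pow (A : Matrix ι ι ℝ) :
    IsBoundedUnder (· ≤ ·) atTop (fun k : ℕ => mnorm (A ^ k) ^ ((k : ℝ)⁻¹)) := by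
  refine ⟨mnorm A, eventually_map.2 ?_⟩
  filter_upwards [eventually_ne_atTop 0] with k hk
  rw [← Real.pow_rpow_inv_natCast (mnorm_nonneg A) hk]
  exact Real.rpow_le_rpow (mnorm_nonneg _) (mnorm_pow_le A hk) (by positivity)

lemma isCoboundedUnder_mnorm_pow (A : Matrix ι ι ℝ) :
    IsCoboundedUnder (· ≤ ·) atTop (fun k : ℕ => mnorm (A ^ k) ^ ((k : ℝ)⁻¹)) :=
  IsBoundedUnder.isCoboundedUnder_le ⟨0, eventually_map.2 (Eventually.of_forall fun _ =>
    Real.rpow_nonneg (mnorm_nonneg _) _)⟩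

lemma specRad_nonneg (A : Matrix ι ι ℝ) : 0 ≤ specRad A :=
  le_limsup_of_frequently_le (Frequently.of_forall fun _ => Real.rpow_nonneg (mnorm_nonneg _) _)
    (isBoundedUnder_mnorm_pow A)

lemma eventually_mnorm_pow_le (h : specRad A < R) : ∀ᶠ k : ℕ in atTop, mnorm (A ^ k) ≤ R ^ k := by
  filter_upwards [eventually_lt_of_limsup_lt h (isBoundedUnder_mnorm_pow A),
    eventually_ne_atTop 0] with k hk hk0
  rw [← Real.rpow_inv_natCast_pow (mnorm_nonneg (A ^ k)) hk0]
  exact pow_le_pow_left₀ (Real.rpow_nonneg (mnorm_nonneg _) _) hk.le k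

lemma frequently_le_mnorm_pow (hR : 0 ≤ R) (h : R < specRad A) :
    ∃ᶠ k : ℕ in atTop, R ^ k ≤ mnorm (A ^ k) := by
  refine ((frequently_lt_of_lt_limsup (isCoboundedUnder_mnorm_pow A) h).and_eventually
    (eventually_ne_atTop 0)).mono fun k ⟨hk, hk0⟩ => ?_
  rw [← Real.rpow_inv_natCast_pow (mnorm_nonneg (A ^ k)) hk0]
  exact pow_le_pow_left₀ hR hk.le k

lemma specRad_le_of_eventually (hR : 0 ≤ R) (h : ∀ᶠ k : ℕ in atTop, mnorm (A ^ k) ≤ R ^ k) :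
    specRad A ≤ R := by
  refine limsup_le_of_le (isCoboundedUnder_mnorm_pow A) ?_
  filter_upwards [h, eventually_ne_atTop 0] with k hk hk0
  rw [← Real.pow_rpow_inv_natCast hR hk0]
  exact Real.rpow_le_rpow (mnorm_nonneg _) hk (by positivity)

variable {c θ₀ θ₁ : ℝ}

lemma pow_apply_le_of_le_mul_rpow (hA : ∀ i j, 0 ≤ A i j) (hB : ∀ i j, 0 ≤ B i j)
    (hC : ∀ i j, 0 ≤ C i j) (hc : 0 ≤ c) (h₀ : 0 ≤ θ₀) (h₁ : 0 ≤ θ₁) (hθ : θ₀ + θ₁ = 1)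
    (h : ∀ i j, C i j ≤ c * (A i j ^ θ₀ * B i j ^ θ₁)) (k : ℕ) (i j : ι) :
    (C ^ k) i j ≤ c ^ k * ((A ^ k) i j ^ θ₀ * (B ^ k) i j ^ θ₁) := by
  have hAk := Matrix.pow_apply_nonneg hA
  have hBk := Matrix.pow_apply_nonneg hB
  induction k generalizing i with
  | zero =>
    simp only [pow_zero, Matrix.one_apply]
    split_ifs
    · simp
    · positivity
  | succ k ih =>
    simp only [pow_succ', Matrix.mul_apply]
    calc ∑ l, C i l * (C ^ k) l j
        ≤ ∑ l, c * c ^ k * ((A i l * (A ^ k) l j) ^ θ₀ * (B i l * (B ^ k) l j) ^ θ₁) := by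
          refine Finset.sum_le_sum fun l _ => ?_
          rw [Real.mul_rpow (hA i l) (hAk k l j), Real.mul_rpow (hB i l) (hBk k l j)]
          refine (mul_le_mul (h i l) (ih l) (Matrix.pow_apply_nonneg hC k l j) ?_).trans_eq
            (by ring)
          exact mul_nonneg hc
            (mul_nonneg (Real.rpow_nonneg (hA i l) _) (Real.rpow_nonneg (hB i l) _))
      _ ≤ _ := by
          rw [← Finset.mul_sum]
          exact mul_le_mul_of_nonneg_left (sum_rpow_mul_rpow_le _
            (fun l _ => mul_nonneg (hA i l) (hAk k l j))
            (fun l _ => mul_nonneg (hB i l) (hBk k l j)) h₀ h₁ hθ) (by positivity)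

/-- Kingman's log-convexity of the spectral radius. -/
theorem specRad_le_of_le_mul_rpow (hA : ∀ i j, 0 ≤ A i j) (hB : ∀ i j, 0 ≤ B i j)
    (hC : ∀ i j, 0 ≤ C i j) (hc : 0 ≤ c) (h₀ : 0 ≤ θ₀) (h₁ : 0 ≤ θ₁) (hθ : θ₀ + θ₁ = 1)
    (h : ∀ i j, C i j ≤ c * (A i j ^ θ₀ * B i j ^ θ₁)) :
    specRad C ≤ c * (specRad A ^ θ₀ * specRad B ^ θ₁) := by
  have hgt : ∀ t > 0, specRad C ≤ c * ((specRad A + t) ^ θ₀ * (specRad B + t) ^ θ₁) := by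
    intro t ht
    have hAt : 0 ≤ specRad A + t := add_nonneg (specRad_nonneg A) ht.le
    have hBt : 0 ≤ specRad B + t := add_nonneg (specRad_nonneg B) ht.le
    refine specRad_le_of_eventually (by positivity) ?_
    filter_upwards [eventually_mnorm_pow_le (lt_add_of_pos_right (specRad A) ht),
      eventually_mnorm_pow_le (lt_add_of_pos_right (specRad B) ht)] with k hAk hBk
    calc mnorm (C ^ k) ≤ c ^ k * (mnorm (A ^ k) ^ θ₀ * mnorm (B ^ k) ^ θ₁) :=
          mnorm_le_of_le_mul_rpow (Matrix.pow_apply_nonneg hA k) (Matrix.pow_apply_nonneg hB k)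
            (Matrix.pow_apply_nonneg hC k) (pow_nonneg hc k) h₀ h₁ hθ
            (pow_apply_le_of_le_mul_rpow hA hB hC hc h₀ h₁ hθ h k)
      _ ≤ c ^ k * (((specRad A + t) ^ k) ^ θ₀ * ((specRad B + t) ^ k) ^ θ₁) := by
          have := mnorm_nonneg (A ^ k)
          have := mnorm_nonneg (B ^ k)
          gcongr
      _ = (c * ((specRad A + t) ^ θ₀ * (specRad B + t) ^ θ₁)) ^ k := by
          rw [mul_pow, mul_pow, Real.rpow_pow_comm hAt, Real.rpow_pow_comm hBt]
  have hcont : Continuous fun t => c * ((specRad A + t) ^ θ₀ * (specRad B + t) ^ θ₁) :=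
    continuous_const.mul (((continuous_const.add continuous_id).rpow_const fun _ => Or.inr h₀).mul
      ((continuous_const.add continuous_id).rpow_const fun _ => Or.inr h₁))
  have hlim := (hcont.tendsto 0).mono_left (nhdsWithin_le_nhds (s := Ioi 0))
  rw [add_zero, add_zero] at hlim
  exact ge_of_tendsto hlim (eventually_nhdsWithin_of_forall hgt)

end specRad

section invariant

variable {ι : Type*} [Fintype ι] [DecidableEq ι] {A : Matrix ι ι ℝ}

lemma mul_geom_sum_mulVec_one (A : Matrix ι ι ℝ) (n : ℕ) :
    A.mulVec ((∑ l ∈ Finset.range n, A ^ l).mulVec 1) + 1 =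
      (∑ l ∈ Finset.range n, A ^ l).mulVec 1 + (A ^ n).mulVec 1 := by
  rw [Matrix.mulVec_mulVec, ← Matrix.add_mulVec, ← Finset.sum_range_succ,
    Finset.sum_range_succ', Matrix.add_mulVec, pow_zero, Matrix.one_mulVec, Finset.mul_sum]
  simp only [pow_succ']

lemma one_le_geom_sum_mulVec_one (hA : ∀ i j, 0 ≤ A i j) {n : ℕ} (hn : n ≠ 0) :
    1 ≤ (∑ l ∈ Finset.range n, A ^ l).mulVec 1 := by
  intro i
  simp only [Matrix.sum_mulVec, Finset.sum_apply]
  have hterm : ∀ l ∈ Finset.range n, 0 ≤ (A ^ l).mulVec 1 i := fun l _ => by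
    simpa [Matrix.mulVec, dotProduct] using
      Finset.sum_nonneg fun j _ => Matrix.pow_apply_nonneg hA l i j
  simpa using Finset.single_le_sum hterm (Finset.mem_range.2 (Nat.pos_of_ne_zero hn))

theorem exists_mulVec_le_self (hA : ∀ i j, 0 ≤ A i j) (hρ : specRad A < 1) :
    ∃ H : ι → ℝ, 1 ≤ H ∧ A.mulVec H ≤ H := by
  obtain ⟨n, hn, hn0⟩ := ((eventually_mnorm_pow_le hρ).and (eventually_ne_atTop 0)).exists
  have hAn : (A ^ n).mulVec 1 ≤ 1 := fun i =>
    calc (A ^ n).mulVec 1 i ≤ ∑ j, |(A ^ n) i j| := by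
          simpa [Matrix.mulVec, dotProduct] using
            Finset.sum_le_sum fun j _ => le_abs_self ((A ^ n) i j)
      _ ≤ mnorm (A ^ n) := sum_abs_le_mnorm _ i
      _ ≤ 1 := by simpa using hn
  refine ⟨_, one_le_geom_sum_mulVec_one hA hn0, ?_⟩
  rw [← add_le_add_iff_right 1, mul_geom_sum_mulVec_one]
  exact add_le_add_right hAn _

lemma exists_pos_le_geom_sum_apply (hA : A.IsIrreducible) :
    ∃ β > 0, ∃ L ≠ 0, ∀ i j, β ≤ (∑ l ∈ Finset.range L, A ^ l) i j := by
  choose k _ hk using (Matrix.isIrreducible_iff_exists_pow_pos hA.nonneg).1 hA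
  obtain ⟨K, hK⟩ := (eventually_all.2 fun i => eventually_all.2 fun j =>
    eventually_gt_atTop (k i j)).exists
  have hpos : ∀ i j, 0 < (∑ l ∈ Finset.range (K + 1), A ^ l) i j := fun i j => by
    rw [Matrix.sum_apply]
    exact (hk i j).trans_le (Finset.single_le_sum (f := fun l => (A ^ l) i j)
      (fun l _ => Matrix.pow_apply_nonneg hA.nonneg l i j)
      (Finset.mem_range.2 ((hK i j).trans K.lt_succ_self)))
  have hβ : ∀ᶠ β in nhdsWithin (0 : ℝ) (Ioi 0), ∀ i j,
      β ≤ (∑ l ∈ Finset.range (K + 1), A ^ l) i j :=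
    eventually_all.2 fun i => eventually_all.2 fun j =>
      eventually_nhdsWithin_of_eventually_nhds (eventually_le_nhds (hpos i j))
  obtain ⟨β, hβ, hβ0⟩ := (hβ.and self_mem_nhdsWithin).exists
  exact ⟨β, hβ0, K + 1, K.succ_ne_zero, hβ⟩

/-- If `B = ∑_{l < L} A ^ l` is positive then `H = B (∑_{l < k} A ^ l) 1` satisfies
`A H - H = B A ^ k 1 - B 1`, and `B A ^ k 1` is unbounded along a sequence of `k`. -/
theorem exists_le_mulVec_self (hA : A.IsIrreducible) (hρ : 1 < specRad A) :
    ∃ H : ι → ℝ, 1 ≤ H ∧ H ≤ A.mulVec H := by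
  obtain ⟨β, hβ, L, hL, hB⟩ := exists_pos_le_geom_sum_apply hA
  set B := ∑ l ∈ Finset.range L, A ^ l
  have hB0 : ∀ i j, 0 ≤ B i j := fun i j => hβ.le.trans (hB i j)
  have hBmono : ∀ {f g : ι → ℝ}, f ≤ g → B.mulVec f ≤ B.mulVec g := fun hfg i =>
    Finset.sum_le_sum fun j _ => mul_le_mul_of_nonneg_left (hfg j) (hB0 i j)
  have hcomm : A * B = B * A := (Commute.sum_right _ _ _ fun l _ => (Commute.refl A).pow_right l)
  obtain ⟨R, hR1, hR⟩ := exists_between hρ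
  obtain ⟨k, hk, hkbig, hk0⟩ := ((frequently_le_mnorm_pow (zero_le_one.trans hR1.le) hR
    ).and_eventually (((tendsto_pow_atTop_atTop_of_one_lt hR1).eventually_ge_atTop
      (mnorm B / β)).and (eventually_ne_atTop 0))).exists
  have hBk : B.mulVec 1 ≤ B.mulVec ((A ^ k).mulVec 1) := fun i =>
    calc B.mulVec 1 i ≤ mnorm B := by
          refine le_trans ?_ (sum_abs_le_mnorm B i)
          simpa [Matrix.mulVec, dotProduct] using
            Finset.sum_le_sum fun j _ => le_abs_self (B i j)
      _ ≤ β * mnorm (A ^ k) := (div_le_iff₀' hβ).1 (hkbig.trans hk)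
      _ ≤ B.mulVec ((A ^ k).mulVec 1) i := by
          rw [mnorm_eq_sum (Matrix.pow_apply_nonneg hA.nonneg k), Finset.mul_sum]
          simp only [Matrix.mulVec, dotProduct, Pi.one_apply, mul_one]
          exact Finset.sum_le_sum fun j _ => mul_le_mul_of_nonneg_right (hB i j)
            (Finset.sum_nonneg fun l _ => Matrix.pow_apply_nonneg hA.nonneg k j l)
  refine ⟨B.mulVec ((∑ l ∈ Finset.range k, A ^ l).mulVec 1),
    (one_le_geom_sum_mulVec_one hA.nonneg hL).trans
      (hBmono (one_le_geom_sum_mulVec_one hA.nonneg hk0)), ?_⟩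
  rw [Matrix.mulVec_mulVec _ A, hcomm, ← Matrix.mulVec_mulVec,
    ← add_le_add_iff_right (B.mulVec 1), ← Matrix.mulVec_add B (A.mulVec _),
    mul_geom_sum_mulVec_one, Matrix.mulVec_add]
  exact add_le_add_right hBk _

end invariant

namespace BoxLikeGIFS

/-! ### The curve `ρ(F) = 1` -/

section Fmat

variable {V E : Type*} (S : BoxLikeGIFS V E)

/-- The weight `p_e^q a_e^x b_e^y` of an edge, the nonzero entry of the column `e` of `F`. -/
noncomputable def edgeWeight (p : E → ℝ) (q x y : ℝ) (e : E) : ℝ :=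
  p e ^ q * S.a e ^ x * S.b e ^ y

lemma Fmat_apply (p : E → ℝ) (q x y : ℝ) (e e' : E) :
    S.Fmat p q x y e e' = if S.term e = S.init e' then S.edgeWeight p q x y e' else 0 := rfl

lemma a_pos (e : E) : 0 < S.a e := (S.a_mem e).1

lemma b_pos (e : E) : 0 < S.b e := (S.b_mem e).1

lemma exists_ratios_le [Finite E] : ∃ r ∈ Ioo (0 : ℝ) 1, ∀ e, S.a e ≤ r ∧ S.b e ≤ r := by
  have h : ∀ᶠ r in nhdsWithin (1 : ℝ) (Iio 1), ∀ e, S.a e ≤ r ∧ S.b e ≤ r :=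
    eventually_all.2 fun e => eventually_nhdsWithin_of_eventually_nhds
      ((eventually_ge_nhds (S.a_mem e).2).and (eventually_ge_nhds (S.b_mem e).2))
  exact ((show ∀ᶠ r in _, r ∈ Ioo (0 : ℝ) 1 from Ioo_mem_nhdsLT one_pos).and h).exists

lemma exists_le_ratios [Finite E] : ∃ η ∈ Ioo (0 : ℝ) 1, ∀ e, η ≤ S.a e ∧ η ≤ S.b e := by
  have h : ∀ᶠ η in nhdsWithin (0 : ℝ) (Ioi 0), ∀ e, η ≤ S.a e ∧ η ≤ S.b e :=
    eventually_all.2 fun e => eventually_nhdsWithin_of_eventually_nhds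
      ((eventually_le_nhds (S.a_pos e)).and (eventually_le_nhds (S.b_pos e)))
  exact ((show ∀ᶠ η in _, η ∈ Ioo (0 : ℝ) 1 from Ioo_mem_nhdsGT one_pos).and h).exists

variable {S} {p : E → ℝ}

lemma edgeWeight_pos (hp : ∀ e, 0 < p e) (q x y : ℝ) (e : E) : 0 < S.edgeWeight p q x y e := by
  have := hp e
  have := S.a_pos e
  have := S.b_pos e
  unfold edgeWeight
  positivity

lemma edgeWeight_eq_exp (hp : ∀ e, 0 < p e) (q x y : ℝ) (e : E) :
    S.edgeWeight p q x y e =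
      Real.exp (Real.log (p e) * q + Real.log (S.a e) * x + Real.log (S.b e) * y) := by
  rw [edgeWeight, Real.rpow_def_of_pos (hp e), Real.rpow_def_of_pos (S.a_pos e),
    Real.rpow_def_of_pos (S.b_pos e), Real.exp_add, Real.exp_add]

lemma Fmat_nonneg (hp : ∀ e, 0 < p e) (q x y : ℝ) (e e' : E) : 0 ≤ S.Fmat p q x y e e' := by
  rw [Fmat_apply]
  split_ifs
  · exact (edgeWeight_pos hp q x y e').le
  · exact le_rfl

lemma edgeWeight_le_mul_rpow (hp : ∀ e, 0 < p e) {r : ℝ} (hr0 : 0 < r) {e : E}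
    (hr : S.a e ≤ r ∧ S.b e ≤ r) (q x₀ y₀ x₁ y₁ : ℝ) {θ₀ θ₁ s t : ℝ} (hθ : θ₀ + θ₁ = 1)
    (hs : 0 ≤ s) (ht : 0 ≤ t) :
    S.edgeWeight p q (θ₀ * x₀ + θ₁ * x₁ + s) (θ₀ * y₀ + θ₁ * y₁ + t) e ≤
      r ^ (s + t) * (S.edgeWeight p q x₀ y₀ e ^ θ₀ * S.edgeWeight p q x₁ y₁ e ^ θ₁) := by
  simp only [edgeWeight_eq_exp hp, Real.rpow_def_of_pos hr0, ← Real.exp_mul, ← Real.exp_add]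
  have ha := mul_le_mul_of_nonneg_right (Real.log_le_log (S.a_pos e) hr.1) hs
  have hb := mul_le_mul_of_nonneg_right (Real.log_le_log (S.b_pos e) hr.2) ht
  refine Real.exp_le_exp.2 ?_
  linear_combination ha + hb - Real.log (p e) * q * hθ

variable [Fintype E]

lemma specRad_Fmat_le (hp : ∀ e, 0 < p e) {r : ℝ} (hr0 : 0 < r)
    (hr : ∀ e, S.a e ≤ r ∧ S.b e ≤ r) (q x₀ y₀ x₁ y₁ : ℝ) {θ₀ θ₁ s t : ℝ} (h₀ : 0 ≤ θ₀)
    (h₁ : 0 ≤ θ₁) (hθ : θ₀ + θ₁ = 1) (hs : 0 ≤ s) (ht : 0 ≤ t) :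
    specRad (S.Fmat p q (θ₀ * x₀ + θ₁ * x₁ + s) (θ₀ * y₀ + θ₁ * y₁ + t)) ≤
      r ^ (s + t) * (specRad (S.Fmat p q x₀ y₀) ^ θ₀ * specRad (S.Fmat p q x₁ y₁) ^ θ₁) := by
  refine specRad_le_of_le_mul_rpow (Fmat_nonneg hp _ _ _) (Fmat_nonneg hp _ _ _)
    (Fmat_nonneg hp _ _ _) (by positivity) h₀ h₁ hθ fun e e' => ?_
  simp only [Fmat_apply]
  split_ifs
  · exact edgeWeight_le_mul_rpow hp hr0 (hr e') q x₀ y₀ x₁ y₁ hθ hs ht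
  · positivity

lemma specRad_Fmat_add_le (hp : ∀ e, 0 < p e) {r : ℝ} (hr0 : 0 < r)
    (hr : ∀ e, S.a e ≤ r ∧ S.b e ≤ r) (q x y : ℝ) {ε : ℝ} (hε : 0 ≤ ε) :
    specRad (S.Fmat p q (x + ε) (y + ε)) ≤ r ^ (ε + ε) * specRad (S.Fmat p q x y) := by
  simpa using specRad_Fmat_le hp hr0 hr q x y x y zero_le_one le_rfl (add_zero 1) hε hε

lemma specRad_Fmat_add_lt_one (hp : ∀ e, 0 < p e) {q x y ε : ℝ}
    (hρ : specRad (S.Fmat p q x y) = 1) (hε : 0 < ε) :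
    specRad (S.Fmat p q (x + ε) (y + ε)) < 1 := by
  obtain ⟨r, hr, hle⟩ := S.exists_ratios_le
  refine (specRad_Fmat_add_le hp hr.1 hle q x y hε.le).trans_lt ?_
  rw [hρ, mul_one]
  exact Real.rpow_lt_one hr.1.le hr.2 (by linarith)

lemma one_lt_specRad_Fmat_sub (hp : ∀ e, 0 < p e) {q x y ε : ℝ}
    (hρ : specRad (S.Fmat p q x y) = 1) (hε : 0 < ε) :
    1 < specRad (S.Fmat p q (x - ε) (y - ε)) := by
  obtain ⟨r, hr, hle⟩ := S.exists_ratios_le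
  have h := specRad_Fmat_add_le hp hr.1 hle q (x - ε) (y - ε) hε.le
  rw [sub_add_cancel, sub_add_cancel, hρ] at h
  have hlt : r ^ (ε + ε) < 1 := Real.rpow_lt_one hr.1.le hr.2 (by linarith)
  have hpos : 0 < r ^ (ε + ε) := Real.rpow_pos_of_pos hr.1 _
  nlinarith

theorem add_le_of_specRad_Fmat_eq_one (hp : ∀ e, 0 < p e) {q x₀ y₀ x₁ y₁ x y θ₀ θ₁ : ℝ}
    (hρ₀ : specRad (S.Fmat p q x₀ y₀) = 1) (hρ₁ : specRad (S.Fmat p q x₁ y₁) = 1)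
    (hρ : specRad (S.Fmat p q x y) = 1) (h₀ : 0 ≤ θ₀) (h₁ : 0 ≤ θ₁) (hθ : θ₀ + θ₁ = 1)
    (hx : θ₀ * x₀ + θ₁ * x₁ ≤ x) (hy : θ₀ * y₀ + θ₁ * y₁ ≤ y) :
    x + y ≤ θ₀ * x₀ + θ₁ * x₁ + (θ₀ * y₀ + θ₁ * y₁) := by
  obtain ⟨r, hr, hle⟩ := S.exists_ratios_le
  have h := specRad_Fmat_le hp hr.1 hle q x₀ y₀ x₁ y₁ h₀ h₁ hθ (sub_nonneg.2 hx) (sub_nonneg.2 hy)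
  rw [add_sub_cancel, add_sub_cancel, hρ, hρ₀, hρ₁, Real.one_rpow, Real.one_rpow, mul_one,
    mul_one] at h
  by_contra! hlt
  exact absurd h (not_le.2 (Real.rpow_lt_one hr.1.le hr.2 (by linarith)))

lemma add_le_max_of_specRad_Fmat_eq_one (hp : ∀ e, 0 < p e) {q x₀ y₀ x₁ y₁ x y θ₀ θ₁ : ℝ}
    (hρ₀ : specRad (S.Fmat p q x₀ y₀) = 1) (hρ₁ : specRad (S.Fmat p q x₁ y₁) = 1)
    (hρ : specRad (S.Fmat p q x y) = 1) (h₀ : 0 ≤ θ₀) (h₁ : 0 ≤ θ₁) (hθ : θ₀ + θ₁ = 1)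
    (hxy : θ₀ * x₀ + θ₁ * x₁ = x ∨ θ₀ * y₀ + θ₁ * y₁ = y) :
    x + y ≤ max (x₀ + y₀) (x₁ + y₁) := by
  have hchord : x + y ≤ θ₀ * (x₀ + y₀) + θ₁ * (x₁ + y₁) := by
    by_contra! hlt
    have := add_le_of_specRad_Fmat_eq_one hp hρ₀ hρ₁ hρ h₀ h₁ hθ
      (by rcases hxy with h | h <;> linarith) (by rcases hxy with h | h <;> linarith)
    linarith
  calc x + y ≤ θ₀ * (x₀ + y₀) + θ₁ * (x₁ + y₁) := hchord
    _ ≤ θ₀ * max (x₀ + y₀) (x₁ + y₁) + θ₁ * max (x₀ + y₀) (x₁ + y₁) := by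
      gcongr
      · exact le_max_left _ _
      · exact le_max_right _ _
    _ = max (x₀ + y₀) (x₁ + y₁) := by rw [← add_mul, hθ, one_mul]

theorem isGreatest_add_of_fst_mem_Icc (hp : ∀ e, 0 < p e) {q x₀ y₀ x₁ y₁ : ℝ}
    (hρ₀ : specRad (S.Fmat p q x₀ y₀) = 1) (hρ₁ : specRad (S.Fmat p q x₁ y₁) = 1)
    (hx : x₀ ≤ x₁) :
    IsGreatest {s : ℝ | ∃ x y : ℝ, specRad (S.Fmat p q x y) = 1 ∧
      x₀ ≤ x ∧ x ≤ x₁ ∧ s = x + y} (max (x₀ + y₀) (x₁ + y₁)) := by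
  constructor
  · rcases max_choice (x₀ + y₀) (x₁ + y₁) with h | h
    · exact ⟨x₀, y₀, hρ₀, le_rfl, hx, h⟩
    · exact ⟨x₁, y₁, hρ₁, hx, le_rfl, h⟩
  · rintro _ ⟨x, y, hρ, h₀, h₁, rfl⟩
    obtain ⟨θ₀, θ₁, hθ₀, hθ₁, hθ, hcomb⟩ := (Convex.mem_Icc hx).1 ⟨h₀, h₁⟩
    exact add_le_max_of_specRad_Fmat_eq_one hp hρ₀ hρ₁ hρ hθ₀ hθ₁ hθ (Or.inl hcomb)

theorem isGreatest_add_of_snd_mem_Icc (hp : ∀ e, 0 < p e) {q x₀ y₀ x₁ y₁ : ℝ}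
    (hρ₀ : specRad (S.Fmat p q x₀ y₀) = 1) (hρ₁ : specRad (S.Fmat p q x₁ y₁) = 1)
    (hy : y₀ ≤ y₁) :
    IsGreatest {s : ℝ | ∃ x y : ℝ, specRad (S.Fmat p q x y) = 1 ∧
      y₀ ≤ y ∧ y ≤ y₁ ∧ s = x + y} (max (x₀ + y₀) (x₁ + y₁)) := by
  constructor
  · rcases max_choice (x₀ + y₀) (x₁ + y₁) with h | h
    · exact ⟨x₀, y₀, hρ₀, le_rfl, hy, h⟩
    · exact ⟨x₁, y₁, hρ₁, hy, le_rfl, h⟩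
  · rintro _ ⟨x, y, hρ, h₀, h₁, rfl⟩
    obtain ⟨θ₀, θ₁, hθ₀, hθ₁, hθ, hcomb⟩ := (Convex.mem_Icc hy).1 ⟨h₀, h₁⟩
    exact add_le_max_of_specRad_Fmat_eq_one hp hρ₀ hρ₁ hρ hθ₀ hθ₁ hθ (Or.inr hcomb)

end Fmat

section StronglyConnected

variable {V E : Type*} {S : BoxLikeGIFS V E}

lemma StronglyConnected.exists_term_eq (hSC : S.StronglyConnected) (v : V) :
    ∃ e, S.term e = v := by
  rcases Relation.transGen_iff _ _ _ |>.1 (hSC v v) with ⟨e, _, h⟩ | ⟨_, _, e, _, h⟩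
  exacts [⟨e, h⟩, ⟨e, h⟩]

variable {p : E → ℝ}

lemma Fmat_pow_succ_pos [Fintype E] (hp : ∀ e, 0 < p e) (q x y : ℝ) {k : ℕ} {e e' e'' : E}
    (hk : 0 < (S.Fmat p q x y ^ k) e e') (he : S.term e' = S.init e'') :
    0 < (S.Fmat p q x y ^ (k + 1)) e e'' := by
  have hlast : 0 < S.Fmat p q x y e' e'' := by
    rw [Fmat_apply, if_pos he]
    exact edgeWeight_pos hp q x y e''
  rw [pow_succ, Matrix.mul_apply]
  exact (mul_pos hk hlast).trans_le (Finset.single_le_sum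
    (f := fun l => (S.Fmat p q x y ^ k) e l * S.Fmat p q x y l e'')
    (fun l _ => mul_nonneg (Matrix.pow_apply_nonneg (Fmat_nonneg hp q x y) k e l)
      (Fmat_nonneg hp q x y l e'')) (Finset.mem_univ e'))

theorem StronglyConnected.isIrreducible_Fmat [Finite E] (hSC : S.StronglyConnected)
    (hp : ∀ e, 0 < p e) (q x y : ℝ) : (S.Fmat p q x y).IsIrreducible := by
  have := Fintype.ofFinite E
  refine (Matrix.isIrreducible_iff_exists_pow_pos (Fmat_nonneg hp q x y)).2 fun e e' => ?_
  suffices h : ∀ v, Relation.TransGen (fun u u' => ∃ f, S.init f = u ∧ S.term f = u')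
      (S.term e) v → ∀ f, S.init f = v → ∃ k > 0, 0 < (S.Fmat p q x y ^ k) e f from
    h _ (hSC _ _) e' rfl
  have hone : 0 < (S.Fmat p q x y ^ 0) e e := by simp
  intro v hv
  induction hv with
  | single h =>
    rintro f rfl
    obtain ⟨g, hg, hgf⟩ := h
    exact ⟨2, two_pos, Fmat_pow_succ_pos hp q x y (Fmat_pow_succ_pos hp q x y hone hg.symm) hgf⟩
  | tail _ h ih =>
    rintro f rfl
    obtain ⟨g, hg, hgf⟩ := h
    obtain ⟨k, _, hk⟩ := ih g hg
    exact ⟨k + 1, k.succ_pos, Fmat_pow_succ_pos hp q x y hk hgf⟩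

end StronglyConnected

end BoxLikeGIFS

/-! ### Counting mesh cubes -/

section Counting

lemma card_le_of_forall_sub_le {s : Finset ℤ} {L : ℝ} (hL : 0 ≤ L)
    (h : ∀ k ∈ s, ∀ l ∈ s, (k - l : ℝ) ≤ L) : (s.card : ℝ) ≤ L + 1 := by
  rcases s.eq_empty_or_nonempty with rfl | hs
  · simpa using hL.trans (le_add_of_nonneg_right zero_le_one)
  have hsub : s ⊆ Finset.Icc (s.min' hs) (s.min' hs + ⌊L⌋) := fun k hk =>
    Finset.mem_Icc.2 ⟨s.min'_le k hk, by
      have : k - s.min' hs ≤ ⌊L⌋ := Int.le_floor.2 (by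
        push_cast
        exact h k hk _ (s.min'_mem hs))
      omega⟩
  have hcard : (s.card : ℤ) ≤ ⌊L⌋ + 1 := by
    have := Finset.card_le_card hsub
    have := Int.floor_nonneg.2 hL
    rw [Int.card_Icc] at *
    omega
  calc (s.card : ℝ) ≤ ⌊L⌋ + 1 := by exact_mod_cast hcard
    _ ≤ L + 1 := by gcongr; exact Int.floor_le L

lemma card_le_sq_of_forall_sub_le {s : Finset (ℤ × ℤ)} {L : ℝ} (hL : 0 ≤ L)
    (h₁ : ∀ k ∈ s, ∀ l ∈ s, (k.1 - l.1 : ℝ) ≤ L) (h₂ : ∀ k ∈ s, ∀ l ∈ s, (k.2 - l.2 : ℝ) ≤ L) :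
    (s.card : ℝ) ≤ (L + 1) ^ 2 := by
  have hsub : s ⊆ s.image Prod.fst ×ˢ s.image Prod.snd := fun k hk =>
    Finset.mem_product.2 ⟨Finset.mem_image_of_mem _ hk, Finset.mem_image_of_mem _ hk⟩
  have hfst : ((s.image Prod.fst).card : ℝ) ≤ L + 1 := card_le_of_forall_sub_le hL
    (Finset.forall_mem_image.2 fun k hk => Finset.forall_mem_image.2 (h₁ k hk))
  have hsnd : ((s.image Prod.snd).card : ℝ) ≤ L + 1 := card_le_of_forall_sub_le hL
    (Finset.forall_mem_image.2 fun k hk => Finset.forall_mem_image.2 (h₂ k hk))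
  calc (s.card : ℝ) ≤ (s.image Prod.fst).card * (s.image Prod.snd).card := by
        exact_mod_cast (Finset.card_le_card hsub).trans_eq (Finset.card_product _ _)
    _ ≤ (L + 1) * (L + 1) := by gcongr
    _ = (L + 1) ^ 2 := by ring

lemma abs_sub_le_of_mem_meshCube1 {δ x y : ℝ} {k : ℤ} (hx : x ∈ meshCube1 δ k)
    (hy : y ∈ meshCube1 δ k) : |x - y| ≤ δ := by
  rw [abs_le]
  constructor <;> linarith [hx.1, hx.2, hy.1, hy.2]

lemma sub_mul_le_of_mem_meshCube1 {δ x y : ℝ} {k l : ℤ} (hx : x ∈ meshCube1 δ k)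
    (hy : y ∈ meshCube1 δ l) : (k - l : ℝ) * δ ≤ |x - y| + δ := by
  linarith [hx.1, hy.2, le_abs_self (x - y)]

lemma exists_mem_Ioo_affine_eq_int_mul {α u a ℓ κ : ℝ} (hκ : 0 < κ) (hℓ : κ ≤ |α| * ℓ) :
    ∃ t ∈ Ioo a (a + ℓ), ∃ m : ℤ, α * t + u = m * (κ / 2) := by
  wlog hα : 0 ≤ α generalizing α u
  · obtain ⟨t, ht, m, hm⟩ := this (u := -u) (by rwa [abs_neg]) (by linarith : 0 ≤ -α)
    exact ⟨t, ht, -m, by push_cast; linarith⟩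
  rw [abs_of_nonneg hα] at hℓ
  have hα : 0 < α := hα.lt_of_ne' fun h => by simp [h] at hℓ; linarith
  obtain ⟨m, ⟨hm₁, hm₂⟩, -⟩ := existsUnique_add_zsmul_mem_Ioc (half_pos hκ) 0 (α * a + u)
  rw [zero_add, zsmul_eq_mul] at hm₁ hm₂
  refine ⟨(m * (κ / 2) - u) / α, ⟨?_, ?_⟩, m, by field_simp; ring⟩
  · rw [lt_div_iff₀ hα]; linarith
  · rw [div_lt_iff₀ hα]; linarith

lemma exists_mem_Ioo_affine_near {α u z κ : ℝ} (hκ : 0 < κ) (hα : κ ≤ |α|)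
    (hz : z ∈ Icc (0 : ℝ) 1) :
    ∃ t ∈ Ioo (0 : ℝ) 1, ∃ m : ℤ, α * t + u = m * (κ / 2) ∧ |m * (κ / 2) - (α * z + u)| ≤ κ := by
  have hα0 : 0 < |α| := hκ.trans_le hα
  have hℓ0 : 0 < κ / |α| := by positivity
  have hℓ1 : κ / |α| ≤ 1 := (div_le_one hα0).2 hα
  obtain ⟨t, ht, m, hm⟩ := exists_mem_Ioo_affine_eq_int_mul (u := u) (a := max 0 (z - κ / |α|)) hκ
    (mul_div_cancel₀ κ hα0.ne').ge
  have hlow : z - κ / |α| < t := (le_max_right _ _).trans_lt ht.1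
  have hup : t < z + κ / |α| := ht.2.trans_le (by
    gcongr
    exact max_le hz.1 (by linarith))
  refine ⟨t, ⟨(le_max_left _ _).trans_lt ht.1, ht.2.trans_le ?_⟩, m, hm, ?_⟩
  · rw [← le_sub_iff_add_le]
    exact max_le (by linarith) (by linarith [hz.2])
  · rw [← hm, add_sub_add_right_eq_sub, ← mul_sub, abs_mul, ← le_div_iff₀' hα0, abs_le]
    constructor <;> linarith

end Counting

/-! ### Rectangles and strips -/

/-- `f` is an affine map of the plane with diagonal linear part which maps the unit square to a
rectangle of width `c` and height `d`. -/
def IsDiagAffine (f : ℝ × ℝ → ℝ × ℝ) (c d : ℝ) : Prop :=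
  ∃ α u : ℝ × ℝ, |α.1| = c ∧ |α.2| = d ∧ f = fun z => α * z + u

/-- The coordinate along the longer side of a rectangle of width `c` and height `d`. -/
noncomputable def longCoord (c d : ℝ) : ℝ × ℝ → ℝ := if d ≤ c then Prod.fst else Prod.snd

/-- The ratio of the shorter to the longer side of a rectangle of width `c` and height `d`. -/
noncomputable def aspectRatio (c d : ℝ) : ℝ := min c d / max c d

/-- The image under `f` of the strip of the unit square over the `k`-th mesh interval meets the
mesh cube `Q` of side `δ`. The strip has the width for which its image in a rectangle of width `c`
and height `d` is a square. -/
def StripMeets (f : ℝ × ℝ → ℝ × ℝ) (c d δ : ℝ) (k : ℤ) (Q : ℤ × ℤ) : Prop :=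
  ∃ z ∈ closedSq, longCoord c d z ∈ meshCube1 (aspectRatio c d) k ∧ f z ∈ meshCube2 δ Q

/-- The moment sum of the projection of `m` along the longer side of a rectangle of width `c` and
height `d`, at the scale at which the strips become squares. -/
noncomputable def projMoment (m : Measure (ℝ × ℝ)) (c d q : ℝ) : ℝ :=
  Dq1 (m.map (longCoord c d)) (aspectRatio c d) q

section Rectangle

variable {f g : ℝ × ℝ → ℝ × ℝ} {c d c' d' η δ q : ℝ}

lemma aspectRatio_pos (hc : 0 < c) (hd : 0 < d) : 0 < aspectRatio c d :=
  div_pos (lt_min hc hd) (hc.trans_le (le_max_left c d))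

lemma max_mul_aspectRatio (hc : 0 < c) : max c d * aspectRatio c d = min c d :=
  mul_div_cancel₀ _ (hc.trans_le (le_max_left c d)).ne'

lemma measurable_longCoord (c d : ℝ) : Measurable (longCoord c d) := by
  unfold longCoord
  split_ifs
  exacts [measurable_fst, measurable_snd]

lemma longCoord_mem_Icc {z : ℝ × ℝ} (hz : z ∈ closedSq) : longCoord c d z ∈ Icc (0 : ℝ) 1 := by
  unfold longCoord
  split_ifs
  exacts [hz.1, hz.2]

lemma map_compl_Icc_of_mapsTo {m : Measure (ℝ × ℝ)} {π : ℝ × ℝ → ℝ} (hπ : Measurable π)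
    (hmaps : MapsTo π closedSq (Icc 0 1)) (hm : m closedSqᶜ = 0) :
    m.map π (Icc (0 : ℝ) 1)ᶜ = 0 := by
  rw [Measure.map_apply hπ measurableSet_Icc.compl]
  exact measure_mono_null (compl_subset_compl.2 hmaps) hm

lemma projMoment_eq_sum (m : Measure (ℝ × ℝ)) [IsFiniteMeasure m] (hm : m closedSqᶜ = 0)
    (hc : 0 < c) (hd : 0 < d) (q : ℝ) :
    projMoment m c d q = ∑ k ∈ meshIndices (aspectRatio c d),
      qpow q (m.real (longCoord c d ⁻¹' meshCube1 (aspectRatio c d) k)) := by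
  have hsupp := map_compl_Icc_of_mapsTo (measurable_longCoord c d)
    (fun _ => longCoord_mem_Icc) hm
  rw [projMoment, Dq1_eq_sum _ hsupp (aspectRatio_pos hc hd)]
  exact Finset.sum_congr rfl fun k _ => congrArg _ (map_measureReal_apply
    (measurable_longCoord c d) measurableSet_Icc)

lemma isDiagAffine_id : IsDiagAffine id 1 1 :=
  ⟨1, 0, abs_one, abs_one, funext fun z => by simp⟩

namespace IsDiagAffine

lemma comp (hf : IsDiagAffine f c d) (hg : IsDiagAffine g c' d') :
    IsDiagAffine (f ∘ g) (c * c') (d * d') := by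
  obtain ⟨α, u, rfl, rfl, rfl⟩ := hf
  obtain ⟨β, w, rfl, rfl, rfl⟩ := hg
  exact ⟨α * β, α * w + u, abs_mul _ _, abs_mul _ _, funext fun z => by
    simp only [Function.comp_apply]
    ring⟩

lemma injective (hf : IsDiagAffine f c d) (hc : 0 < c) (hd : 0 < d) : Function.Injective f := by
  obtain ⟨α, u, rfl, rfl, rfl⟩ := hf
  intro z z' h
  rw [Prod.ext_iff] at h
  simpa [Prod.ext_iff, abs_pos.1 hc, abs_pos.1 hd] using h

lemma abs_fst_sub (hf : IsDiagAffine f c d) (z z' : ℝ × ℝ) :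
    |(f z).1 - (f z').1| = c * |z.1 - z'.1| := by
  obtain ⟨α, u, rfl, rfl, rfl⟩ := hf
  rw [← abs_mul]
  simp [mul_sub]

lemma abs_snd_sub (hf : IsDiagAffine f c d) (z z' : ℝ × ℝ) :
    |(f z).2 - (f z').2| = d * |z.2 - z'.2| := by
  obtain ⟨α, u, rfl, rfl, rfl⟩ := hf
  rw [← abs_mul]
  simp [mul_sub]

/-- The images of the strips are squares. -/
lemma dist_le_min (hf : IsDiagAffine f c d) (hc : 0 < c) (hd : 0 < d) {k : ℤ} {z z' : ℝ × ℝ}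
    (hz : z ∈ closedSq) (hz' : z' ∈ closedSq)
    (hk : longCoord c d z ∈ meshCube1 (aspectRatio c d) k)
    (hk' : longCoord c d z' ∈ meshCube1 (aspectRatio c d) k) :
    dist (f z) (f z') ≤ min c d := by
  have hlong := abs_sub_le_of_mem_meshCube1 hk hk'
  have hunit : ∀ {x y : ℝ}, x ∈ Icc (0 : ℝ) 1 → y ∈ Icc (0 : ℝ) 1 → |x - y| ≤ 1 := fun hx hy =>
    abs_le.2 ⟨by linarith [hx.1, hy.2], by linarith [hx.2, hy.1]⟩
  rw [← max_mul_aspectRatio hc, Prod.dist_eq, Real.dist_eq, Real.dist_eq, hf.abs_fst_sub,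
    hf.abs_snd_sub, max_mul_aspectRatio hc]
  unfold longCoord aspectRatio at hlong
  split_ifs at hlong with h
  · rw [min_eq_right h, max_eq_left h, le_div_iff₀' hc] at hlong
    rw [min_eq_right h]
    exact max_le hlong (mul_le_of_le_one_right hd.le (hunit hz.2 hz'.2))
  · have h := (not_le.1 h).le
    rw [min_eq_left h, max_eq_right h, le_div_iff₀' hd] at hlong
    rw [min_eq_left h]
    exact max_le (mul_le_of_le_one_right hc.le (hunit hz.1 hz'.1)) hlong

lemma max_mul_abs_longCoord_sub_le (hf : IsDiagAffine f c d) {Q : ℤ × ℤ} {z z' : ℝ × ℝ}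
    (hz : f z ∈ meshCube2 δ Q) (hz' : f z' ∈ meshCube2 δ Q) :
    max c d * |longCoord c d z - longCoord c d z'| ≤ δ := by
  unfold longCoord
  split_ifs with h
  · rw [max_eq_left h, ← hf.abs_fst_sub]
    exact abs_sub_le_of_mem_meshCube1 hz.1 hz'.1
  · rw [max_eq_right (not_le.1 h).le, ← hf.abs_snd_sub]
    exact abs_sub_le_of_mem_meshCube1 hz.2 hz'.2

lemma card_stripMeets_cubes_le (hf : IsDiagAffine f c d) (hc : 0 < c) (hd : 0 < d) (hδ : 0 < δ)
    (hmin : min c d ≤ δ) {k : ℤ} {s : Finset (ℤ × ℤ)} (hs : ∀ Q ∈ s, StripMeets f c d δ k Q) :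
    (s.card : ℝ) ≤ 9 := by
  have hdiff : ∀ {m l : ℤ} {x y : ℝ}, x ∈ meshCube1 δ m → y ∈ meshCube1 δ l →
      |x - y| ≤ min c d → (m - l : ℝ) ≤ 2 := fun hx hy hxy => by
    refine le_of_mul_le_mul_right ?_ hδ
    linarith [sub_mul_le_of_mem_meshCube1 hx hy]
  have hdist : ∀ Q ∈ s, ∀ Q' ∈ s, (Q.1 - Q'.1 : ℝ) ≤ 2 ∧ (Q.2 - Q'.2 : ℝ) ≤ 2 := by
    intro Q hQ Q' hQ'
    obtain ⟨z, hz, hk, hzQ⟩ := hs Q hQ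
    obtain ⟨z', hz', hk', hzQ'⟩ := hs Q' hQ'
    have hzz := hf.dist_le_min hc hd hz hz' hk hk'
    exact ⟨hdiff hzQ.1 hzQ'.1 ((le_max_left _ _).trans hzz),
      hdiff hzQ.2 hzQ'.2 ((le_max_right _ _).trans hzz)⟩
  calc (s.card : ℝ) ≤ (2 + 1) ^ 2 := card_le_sq_of_forall_sub_le zero_le_two
        (fun Q hQ Q' hQ' => (hdist Q hQ Q' hQ').1) fun Q hQ Q' hQ' => (hdist Q hQ Q' hQ').2
    _ = 9 := by norm_num

lemma card_stripMeets_strips_le (hf : IsDiagAffine f c d) (hc : 0 < c) (hd : 0 < d) (hη : 0 < η)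
    (hmin : η * δ ≤ min c d) {Q : ℤ × ℤ} {s : Finset ℤ}
    (hs : ∀ k ∈ s, StripMeets f c d δ k Q) : (s.card : ℝ) ≤ 1 / η + 2 := by
  have hmin0 : 0 < min c d := lt_min hc hd
  have : 0 < max c d := hc.trans_le (le_max_left c d)
  have hδ : δ ≤ 1 / η * min c d := by
    rwa [one_div, ← div_eq_inv_mul, le_div_iff₀' hη]
  refine (card_le_of_forall_sub_le (L := 1 / η + 1) (by positivity) fun k hk l hl => ?_).trans_eq
    (by ring)
  obtain ⟨z, -, hzk, hzQ⟩ := hs k hk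
  obtain ⟨z', -, hzl, hzQ'⟩ := hs l hl
  refine le_of_mul_le_mul_right ?_ hmin0
  calc (k - l : ℝ) * min c d = max c d * ((k - l) * aspectRatio c d) := by
        rw [← max_mul_aspectRatio hc]; ring
    _ ≤ max c d * (|longCoord c d z - longCoord c d z'| + aspectRatio c d) := by
        gcongr
        exact sub_mul_le_of_mem_meshCube1 hzk hzl
    _ ≤ δ + min c d := by
        rw [mul_add, max_mul_aspectRatio hc]
        gcongr
        exact hf.max_mul_abs_longCoord_sub_le hzQ hzQ'
    _ ≤ (1 / η + 1) * min c d := by linarith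

lemma exists_image_unitSq_eq_lattice (hf : IsDiagAffine f c d) {κ : ℝ} (hκ : 0 < κ)
    (hmin : κ ≤ min c d) {z : ℝ × ℝ} (hz : z ∈ closedSq) :
    ∃ m : ℤ × ℤ, ((m.1 * (κ / 2), m.2 * (κ / 2)) : ℝ × ℝ) ∈ f '' BoxLikeGIFS.unitSq ∧
      |m.1 * (κ / 2) - (f z).1| ≤ κ ∧ |m.2 * (κ / 2) - (f z).2| ≤ κ := by
  obtain ⟨α, u, rfl, rfl, rfl⟩ := hf
  obtain ⟨t₁, ht₁, m₁, he₁, hm₁⟩ := exists_mem_Ioo_affine_near (u := u.1) hκ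
    (hmin.trans (min_le_left _ _)) hz.1
  obtain ⟨t₂, ht₂, m₂, he₂, hm₂⟩ := exists_mem_Ioo_affine_near (u := u.2) hκ
    (hmin.trans (min_le_right _ _)) hz.2
  exact ⟨(m₁, m₂), ⟨(t₁, t₂), ⟨ht₁, ht₂⟩, Prod.ext he₁ he₂⟩, hm₁, hm₂⟩

end IsDiagAffine

/-- Non-overlapping rectangles contain distinct points of a lattice of mesh comparable to `δ`, close
to the mesh cube which they meet. -/
lemma card_rectangles_meeting_le {ι : Type*} {f : ι → ℝ × ℝ → ℝ × ℝ} {c d : ι → ℝ} {s : Finset ι}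
    (hf : ∀ i ∈ s, IsDiagAffine (f i) (c i) (d i)) (hη : 0 < η) (hδ : 0 < δ)
    (hdisj : (s : Set ι).PairwiseDisjoint fun i => f i '' BoxLikeGIFS.unitSq)
    (hmin : ∀ i ∈ s, η * δ ≤ min (c i) (d i)) {Q : ℤ × ℤ}
    (hQ : ∀ i ∈ s, ∃ z ∈ closedSq, f i z ∈ meshCube2 δ Q) :
    (s.card : ℝ) ≤ (2 / η + 5) ^ 2 := by
  have hκ : 0 < η * δ := mul_pos hη hδ
  choose! z hz hzQ using hQ
  choose! m hm hm₁ hm₂ using fun i (hi : i ∈ s) =>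
    (hf i hi).exists_image_unitSq_eq_lattice hκ (hmin i hi) (hz i hi)
  have hinj : InjOn m s := fun i hi j hj hij =>
    hdisj.elim_set hi hj _ (hm i hi) (by rw [hij]; exact hm j hj)
  have hdiff : ∀ {k l : ℤ} {x y : ℝ} {n : ℤ}, |k * (η * δ / 2) - x| ≤ η * δ →
      |l * (η * δ / 2) - y| ≤ η * δ → x ∈ meshCube1 δ n → y ∈ meshCube1 δ n →
      (k - l : ℝ) ≤ 2 / η + 4 := by
    intro k l x y n hx hy hxn hyn
    have hxy := (abs_le.1 (abs_sub_le_of_mem_meshCube1 hxn hyn)).2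
    refine le_of_mul_le_mul_right ?_ (half_pos hκ)
    calc (k - l : ℝ) * (η * δ / 2) ≤ δ + 2 * (η * δ) := by
          linarith [(abs_le.1 hx).2, (abs_le.1 hy).1]
      _ = (2 / η + 4) * (η * δ / 2) := by field_simp; ring
  rw [← Finset.card_image_of_injOn hinj]
  refine (card_le_sq_of_forall_sub_le (L := 2 / η + 4) (by positivity)
    (Finset.forall_mem_image.2 fun i hi => Finset.forall_mem_image.2 fun j hj => ?_)
    (Finset.forall_mem_image.2 fun i hi => Finset.forall_mem_image.2 fun j hj => ?_)).trans_eq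
    (by ring)
  · exact hdiff (hm₁ i hi) (hm₁ j hj) (hzQ i hi).1 (hzQ j hj).1
  · exact hdiff (hm₂ i hi) (hm₂ j hj) (hzQ i hi).2 (hzQ j hj).2

end Rectangle

/-! ### Moment sums of tiled measures -/

/-- `ν` is the sum of the measures `P i • (m i).map (f i)`, which live on non-overlapping
rectangles of width `c i` and height `d i` in the unit square, with shorter sides comparable to
`δ`. -/
structure IsTiling {ι : Type*} [Fintype ι] (ν : Measure (ℝ × ℝ)) (P : ι → ℝ)
    (m : ι → Measure (ℝ × ℝ)) (f : ι → ℝ × ℝ → ℝ × ℝ) (c d : ι → ℝ) (η δ : ℝ) : Prop where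
  weight_pos : ∀ i, 0 < P i
  width_pos : ∀ i, 0 < c i
  height_pos : ∀ i, 0 < d i
  isDiagAffine : ∀ i, IsDiagAffine (f i) (c i) (d i)
  mapsTo_closedSq : ∀ i, MapsTo (f i) closedSq closedSq
  disjoint : Pairwise fun i j =>
    Disjoint (f i '' BoxLikeGIFS.unitSq) (f j '' BoxLikeGIFS.unitSq)
  le_min : ∀ i, η * δ ≤ min (c i) (d i)
  min_le : ∀ i, min (c i) (d i) ≤ δ
  real_eq : ∀ A, MeasurableSet A → ν.real A = ∑ i, P i * (m i).real (f i ⁻¹' A)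

lemma measurableSet_meshCube2 (δ : ℝ) (Q : ℤ × ℤ) : MeasurableSet (meshCube2 δ Q) :=
  measurableSet_Icc.prod measurableSet_Icc

lemma measureReal_le_sum_of_subset {X : Type*} [MeasurableSpace X] {m : Measure X}
    [IsFiniteMeasure m] {K A : Set X} (hm : m Kᶜ = 0) {κ : Type*} (s : Finset κ) (B : κ → Set X)
    (h : ∀ z ∈ A ∩ K, ∃ k ∈ s, z ∈ B k) : m.real A ≤ ∑ k ∈ s, m.real (B k) :=
  calc m.real A = m.real (A ∩ K) := by simp only [Measure.real, measure_inter_conull hm]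
    _ ≤ m.real (⋃ k ∈ s, B k) :=
      measureReal_mono (fun z hz => by simpa using h z hz) (measure_ne_top _ _)
    _ ≤ ∑ k ∈ s, m.real (B k) := measureReal_biUnion_finset_le s B

namespace IsTiling

variable {ι : Type*} [Fintype ι] {ν : Measure (ℝ × ℝ)} {P : ι → ℝ} {m : ι → Measure (ℝ × ℝ)}
  {f : ι → ℝ × ℝ → ℝ × ℝ} {c d : ι → ℝ} {η δ q : ℝ}

/-- The indices of the strips of the tiles. -/
noncomputable def strips (c d : ι → ℝ) : Finset (Σ _ : ι, ℤ) :=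
  Finset.univ.sigma fun i => meshIndices (aspectRatio (c i) (d i))

/-- The mass which a tiled measure gives to a strip of a tile. -/
noncomputable def stripMass (P : ι → ℝ) (m : ι → Measure (ℝ × ℝ)) (c d : ι → ℝ)
    (j : Σ _ : ι, ℤ) : ℝ :=
  P j.1 * (m j.1).real (longCoord (c j.1) (d j.1) ⁻¹' meshCube1 (aspectRatio (c j.1) (d j.1)) j.2)

lemma stripMass_nonneg (h : IsTiling ν P m f c d η δ) (j : Σ _ : ι, ℤ) :
    0 ≤ stripMass P m c d j :=
  mul_nonneg (h.weight_pos _).le measureReal_nonneg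

lemma card_strips_meeting_le (h : IsTiling ν P m f c d η δ) (hη : 0 < η) (hδ : 0 < δ)
    (Q : ℤ × ℤ) :
    (((strips c d).filter fun j => StripMeets (f j.1) (c j.1) (d j.1) δ j.2 Q).card : ℝ) ≤
      (2 / η + 5) ^ 2 * (1 / η + 2) := by
  set I := Finset.univ.filter fun i => ∃ z ∈ closedSq, f i z ∈ meshCube2 δ Q
  set K : ι → Finset ℤ := fun i => (meshIndices (aspectRatio (c i) (d i))).filter fun k =>
    StripMeets (f i) (c i) (d i) δ k Q
  have hsub : ((strips c d).filter fun j => StripMeets (f j.1) (c j.1) (d j.1) δ j.2 Q) ⊆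
      I.sigma K := by
    rintro ⟨i, k⟩ hj
    obtain ⟨hk, hmeet⟩ := Finset.mem_filter.1 hj
    obtain ⟨z, hz, -, hzQ⟩ := id hmeet
    exact Finset.mem_sigma.2 ⟨Finset.mem_filter.2 ⟨Finset.mem_univ i, z, hz, hzQ⟩,
      Finset.mem_filter.2 ⟨(Finset.mem_sigma.1 hk).2, hmeet⟩⟩
  have hI : (I.card : ℝ) ≤ (2 / η + 5) ^ 2 :=
    card_rectangles_meeting_le (fun i _ => h.isDiagAffine i) hη hδ
      (fun i _ j _ hij => h.disjoint hij) (fun i _ => h.le_min i)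
      fun i hi => (Finset.mem_filter.1 hi).2
  have hK : ∀ i ∈ I, ((K i).card : ℝ) ≤ 1 / η + 2 := fun i _ =>
    (h.isDiagAffine i).card_stripMeets_strips_le (h.width_pos i) (h.height_pos i) hη (h.le_min i)
      fun k hk => (Finset.mem_filter.1 hk).2
  calc _ ≤ ((I.sigma K).card : ℝ) := by exact_mod_cast Finset.card_le_card hsub
    _ = ∑ i ∈ I, ((K i).card : ℝ) := by rw [Finset.card_sigma, Nat.cast_sum]
    _ ≤ I.card * (1 / η + 2) := (Finset.sum_le_card_nsmul _ _ _ hK).trans_eq (nsmul_eq_mul _ _)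
    _ ≤ (2 / η + 5) ^ 2 * (1 / η + 2) := by gcongr

lemma card_cubes_meeting_le (h : IsTiling ν P m f c d η δ) (hδ : 0 < δ) (j : Σ _ : ι, ℤ) :
    (((meshIndices δ ×ˢ meshIndices δ).filter
      fun Q => StripMeets (f j.1) (c j.1) (d j.1) δ j.2 Q).card : ℝ) ≤ 9 :=
  (h.isDiagAffine j.1).card_stripMeets_cubes_le (h.width_pos _) (h.height_pos _) hδ
    (h.min_le _) fun _ hQ => (Finset.mem_filter.1 hQ).2

variable [∀ i, IsFiniteMeasure (m i)]

lemma sum_projMoment_eq (h : IsTiling ν P m f c d η δ) (hm : ∀ i, m i closedSqᶜ = 0) (q : ℝ) :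
    ∑ i, P i ^ q * projMoment (m i) (c i) (d i) q =
      ∑ j ∈ strips c d, qpow q (stripMass P m c d j) := by
  rw [strips, Finset.sum_sigma]
  refine Finset.sum_congr rfl fun i _ => ?_
  rw [projMoment_eq_sum _ (hm i) (h.width_pos i) (h.height_pos i), Finset.mul_sum]
  exact Finset.sum_congr rfl fun k _ => (qpow_mul (h.weight_pos i) measureReal_nonneg).symm

lemma real_meshCube2_le (h : IsTiling ν P m f c d η δ) (hm : ∀ i, m i closedSqᶜ = 0)
    (Q : ℤ × ℤ) :
    ν.real (meshCube2 δ Q) ≤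
      ∑ j ∈ strips c d with StripMeets (f j.1) (c j.1) (d j.1) δ j.2 Q, stripMass P m c d j := by
  rw [h.real_eq _ (measurableSet_meshCube2 δ Q), Finset.sum_filter, strips,
    Finset.sum_sigma]
  refine Finset.sum_le_sum fun i _ => ?_
  simp only [stripMass]
  rw [← Finset.sum_filter, ← Finset.mul_sum]
  refine mul_le_mul_of_nonneg_left ?_ (h.weight_pos i).le
  refine measureReal_le_sum_of_subset (hm i) _ _ fun z hz => ?_
  have hs := aspectRatio_pos (h.width_pos i) (h.height_pos i)
  have hzk := mem_meshCube1_floor hs (longCoord (c i) (d i) z)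
  exact ⟨_, Finset.mem_filter.2 ⟨floor_div_mem_meshIndices hs (longCoord_mem_Icc hz.2),
    z, hz.2, hzk, hz.1⟩, hzk⟩

lemma stripMass_le (h : IsTiling ν P m f c d η δ) (hm : ∀ i, m i closedSqᶜ = 0)
    (hδ : 0 < δ) (j : Σ _ : ι, ℤ) :
    stripMass P m c d j ≤ ∑ Q ∈ meshIndices δ ×ˢ meshIndices δ with
      StripMeets (f j.1) (c j.1) (d j.1) δ j.2 Q, ν.real (meshCube2 δ Q) := by
  obtain ⟨i, k⟩ := j
  calc stripMass P m c d ⟨i, k⟩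
      ≤ P i * ∑ Q ∈ meshIndices δ ×ˢ meshIndices δ with StripMeets (f i) (c i) (d i) δ k Q,
          (m i).real (f i ⁻¹' meshCube2 δ Q) := by
        refine mul_le_mul_of_nonneg_left ?_ (h.weight_pos i).le
        refine measureReal_le_sum_of_subset (hm i) _ _ fun z hz => ?_
        have hfz := h.mapsTo_closedSq i hz.2
        have hcube : f i z ∈ meshCube2 δ (⌊(f i z).1 / δ⌋, ⌊(f i z).2 / δ⌋) :=
          ⟨mem_meshCube1_floor hδ _, mem_meshCube1_floor hδ _⟩
        exact ⟨_, Finset.mem_filter.2 ⟨Finset.mem_product.2 ⟨floor_div_mem_meshIndices hδ hfz.1,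
          floor_div_mem_meshIndices hδ hfz.2⟩, z, hz.2, hz.1, hcube⟩, hcube⟩
    _ ≤ _ := by
        rw [Finset.mul_sum]
        refine Finset.sum_le_sum fun Q _ => ?_
        rw [h.real_eq _ (measurableSet_meshCube2 δ Q)]
        exact Finset.single_le_sum (f := fun i => P i * (m i).real (f i ⁻¹' meshCube2 δ Q))
          (fun i _ => mul_nonneg (h.weight_pos i).le measureReal_nonneg) (Finset.mem_univ i)

variable [IsFiniteMeasure ν]

theorem Dq2_le (h : IsTiling ν P m f c d η δ) (hν : ν closedSqᶜ = 0)
    (hm : ∀ i, m i closedSqᶜ = 0) (hη : 0 < η) (hδ : 0 < δ) (hq : 0 ≤ q) :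
    Dq2 ν δ q ≤ ((2 / η + 5) ^ 2 * (1 / η + 2)) ^ q * 9 *
      ∑ i, P i ^ q * projMoment (m i) (c i) (d i) q := by
  rw [Dq2_eq_sum ν hν hδ q, h.sum_projMoment_eq hm]
  refine sum_qpow_le_of_relation
    (fun Q j => StripMeets (f j.1) (c j.1) (d j.1) δ j.2 Q) hq (by positivity)
    (fun _ _ => measureReal_nonneg) (fun j _ => h.stripMass_nonneg j) ?_ ?_ ?_
  · exact fun Q _ => h.real_meshCube2_le hm Q
  · exact fun Q _ => h.card_strips_meeting_le hη hδ Q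
  · exact fun j _ => h.card_cubes_meeting_le hδ j

theorem sum_projMoment_le (h : IsTiling ν P m f c d η δ) (hν : ν closedSqᶜ = 0)
    (hm : ∀ i, m i closedSqᶜ = 0) (hη : 0 < η) (hδ : 0 < δ) (hq : 0 ≤ q) :
    ∑ i, P i ^ q * projMoment (m i) (c i) (d i) q ≤
      9 ^ q * ((2 / η + 5) ^ 2 * (1 / η + 2)) * Dq2 ν δ q := by
  rw [Dq2_eq_sum ν hν hδ q, h.sum_projMoment_eq hm]
  refine sum_qpow_le_of_relation
    (fun j Q => StripMeets (f j.1) (c j.1) (d j.1) δ j.2 Q) hq (by norm_num)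
    (fun j _ => h.stripMass_nonneg j) (fun _ _ => measureReal_nonneg) ?_ ?_ ?_
  · exact fun j _ => h.stripMass_le hm hδ j
  · exact fun j _ => h.card_cubes_meeting_le hδ j
  · exact fun Q _ => h.card_strips_meeting_le hη hδ Q

end IsTiling

/-! ### Support of the measures -/

lemma closure_unitSq : closure BoxLikeGIFS.unitSq = closedSq := by
  simp [BoxLikeGIFS.unitSq, closedSq, closure_prod_eq, closure_Ioo]

lemma mapsTo_closedSq {f : ℝ × ℝ → ℝ × ℝ} (hf : Continuous f)
    (h : f '' BoxLikeGIFS.unitSq ⊆ BoxLikeGIFS.unitSq) : MapsTo f closedSq closedSq := by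
  simpa only [closure_unitSq] using (mapsTo_iff_image_subset.2 h).closure hf

namespace BoxLikeGIFS

section Support

variable {V E : Type*} {S : BoxLikeGIFS V E} {p : E → ℝ} {μ : V → Measure (ℝ × ℝ)}

lemma dist_map_le {e : E} {r : ℝ} (hr : S.a e ≤ r ∧ S.b e ≤ r) (z z' : ℝ × ℝ) :
    dist (S.map e z) (S.map e z') ≤ r * dist z z' := by
  have hsign : ∀ {σ c u : ℝ}, σ = 1 ∨ σ = -1 → 0 < c → c ≤ r → ∀ {t t' : ℝ},
      dist t t' ≤ dist z z' → dist (σ * c * t + u) (σ * c * t' + u) ≤ r * dist z z' := by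
    intro σ c u hσ hc hcr t t' ht
    have hσ : |σ| = 1 := by rcases hσ with rfl | rfl <;> simp
    rw [dist_add_right, Real.dist_eq, ← mul_sub, abs_mul, abs_mul, hσ, one_mul, abs_of_pos hc]
    exact mul_le_mul hcr ht (abs_nonneg _) (hc.le.trans hcr)
  unfold map
  split_ifs
  · exact max_le (hsign (S.sa_mem e) (S.a_pos e) hr.1 (le_max_left _ _))
      (hsign (S.sb_mem e) (S.b_pos e) hr.2 (le_max_right _ _))
  · exact max_le (hsign (S.sa_mem e) (S.a_pos e) hr.1 (le_max_right _ _))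
      (hsign (S.sb_mem e) (S.b_pos e) hr.2 (le_max_left _ _))

lemma continuous_map (S : BoxLikeGIFS V E) (e : E) : Continuous (S.map e) := by
  unfold map
  split_ifs <;> fun_prop

lemma infDist_map_le (hROSC : S.ROSC) {e : E} {r : ℝ} (hr : S.a e ≤ r ∧ S.b e ≤ r) (z : ℝ × ℝ) :
    Metric.infDist (S.map e z) closedSq ≤ r * Metric.infDist z closedSq := by
  have hK : IsCompact closedSq := isCompact_Icc.prod isCompact_Icc
  obtain ⟨y, hy, hzy⟩ := hK.exists_infDist_eq_dist ⟨(0, 0), by simp [closedSq]⟩ z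
  rw [hzy]
  exact (Metric.infDist_le_dist_of_mem
    (mapsTo_closedSq (S.continuous_map e) (hROSC.1 e) hy)).trans (dist_map_le hr z y)

/-- The set of points at distance more than `t` from the closed unit square. -/
def farFromSq (t : ℝ) : Set (ℝ × ℝ) := {z | t < Metric.infDist z closedSq}

lemma measurableSet_farFromSq (t : ℝ) : MeasurableSet (farFromSq t) :=
  measurableSet_lt measurable_const (Metric.continuous_infDist_pt _).measurable

lemma tendsto_measureReal_farFromSq (ν : Measure (ℝ × ℝ)) [IsFiniteMeasure ν] :
    Tendsto (fun t => ν.real (farFromSq t)) atTop (nhds 0) := by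
  have hanti : Antitone farFromSq := fun s t hst z (hz : t < _) => (hst.trans_lt hz : s < _)
  have hempty : ⋂ t, farFromSq t = ∅ := eq_empty_of_forall_notMem fun z hz =>
    lt_irrefl (Metric.infDist z closedSq) (mem_iInter.1 hz (Metric.infDist z closedSq))
  have h := tendsto_measure_iInter_atTop (μ := ν)
    (fun t => (measurableSet_farFromSq t).nullMeasurableSet) hanti ⟨0, measure_ne_top _ _⟩
  rw [hempty, measure_empty] at h
  exact (ENNReal.tendsto_toReal ENNReal.zero_ne_top).comp h

lemma compl_closedSq_subset_iUnion_farFromSq :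
    closedSqᶜ ⊆ ⋃ n : ℕ, farFromSq (1 / ((n : ℝ) + 1)) := fun z hz => by
  have hcl : IsClosed closedSq := isClosed_Icc.prod isClosed_Icc
  have hpos := (hcl.notMem_iff_infDist_pos ⟨(0, 0), by simp [closedSq]⟩).1 hz
  exact mem_iUnion.2 (exists_nat_one_div_lt hpos)

variable [Fintype E]

lemma IsGDMeasure.measureReal_eq_sum (hμ : S.IsGDMeasure p μ) (hp : ∀ e, 0 < p e) (v : V)
    {A : Set (ℝ × ℝ)} (hA : MeasurableSet A) :
    (μ v).real A =
      ∑ e with S.init e = v, p e * (μ (S.term e)).real (S.map e ⁻¹' A) := by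
  have := hμ.1
  have h : μ v A = ∑ e with S.init e = v,
      ENNReal.ofReal (p e) * μ (S.term e) (S.map e ⁻¹' A) := by
    conv_lhs => rw [hμ.2 v]
    rw [← Finset.sum_filter, Measure.finsetSum_apply]
    refine Finset.sum_congr rfl fun e _ => ?_
    rw [Measure.smul_apply, Measure.map_apply (S.continuous_map e).measurable hA, smul_eq_mul]
  rw [Measure.real, h, ENNReal.toReal_sum fun e _ =>
    ENNReal.mul_ne_top ENNReal.ofReal_ne_top (measure_ne_top _ _)]
  refine Finset.sum_congr rfl fun e _ => ?_
  rw [ENNReal.toReal_mul, ENNReal.toReal_ofReal (hp e).le, Measure.real]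

lemma IsGDMeasure.measureReal_farFromSq_le (hμ : S.IsGDMeasure p μ) (hp : S.IsWeights p)
    (hROSC : S.ROSC) {r : ℝ} (hr0 : 0 < r) (hr : ∀ e, S.a e ≤ r ∧ S.b e ≤ r) {m t : ℝ}
    (hm : ∀ v, (μ v).real (farFromSq (t / r)) ≤ m) (v : V) :
    (μ v).real (farFromSq t) ≤ m := by
  have := hμ.1
  calc (μ v).real (farFromSq t)
      = ∑ e with S.init e = v, p e * (μ (S.term e)).real (S.map e ⁻¹' farFromSq t) :=
        hμ.measureReal_eq_sum hp.1 v (measurableSet_farFromSq t)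
    _ ≤ ∑ e with S.init e = v, p e * m := by
        refine Finset.sum_le_sum fun e _ => mul_le_mul_of_nonneg_left ?_ (hp.1 e).le
        refine (measureReal_mono fun z hz => ?_).trans (hm (S.term e))
        exact (div_lt_iff₀' hr0).2 (lt_of_lt_of_le hz (infDist_map_le hROSC (hr e) z))
    _ = m := by rw [← Finset.sum_mul, Finset.sum_filter, hp.2 v, one_mul]

/-- The mass at distance more than `t` from the square is at most the mass at distance more than
`t / r ^ n`, where `r < 1` bounds the contraction ratios. -/
theorem IsGDMeasure.measure_compl_closedSq [Finite V] (hμ : S.IsGDMeasure p μ)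
    (hp : S.IsWeights p) (hROSC : S.ROSC) (v : V) : μ v closedSqᶜ = 0 := by
  have := hμ.1
  obtain ⟨r, ⟨hr0, hr1⟩, hr⟩ := S.exists_ratios_le
  have hiter : ∀ (n : ℕ) {m t : ℝ}, (∀ u, (μ u).real (farFromSq (t / r ^ n)) ≤ m) →
      ∀ u, (μ u).real (farFromSq t) ≤ m := by
    intro n
    induction n with
    | zero => intro m t h; simpa using h
    | succ n ih =>
      intro m t h
      refine hμ.measureReal_farFromSq_le hp hROSC hr0 hr (ih fun u => ?_)
      rw [div_div, ← pow_succ']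
      exact h u
  have hnull : ∀ t > 0, μ v (farFromSq t) = 0 := by
    intro t ht
    rw [← measureReal_eq_zero_iff]
    refine le_antisymm (le_of_forall_pos_le_add fun ε hε => ?_) measureReal_nonneg
    rw [zero_add]
    have hsmall : ∀ᶠ s in atTop, ∀ u, (μ u).real (farFromSq s) ≤ ε := eventually_all.2 fun u =>
      ((tendsto_measureReal_farFromSq (μ u)).eventually_lt_const hε).mono fun _ h => h.le
    have hlarge : Tendsto (fun n : ℕ => t / r ^ n) atTop atTop := by
      simp only [div_eq_mul_inv, ← inv_pow]
      exact (tendsto_pow_atTop_atTop_of_one_lt ((one_lt_inv₀ hr0).2 hr1)).const_mul_atTop ht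
    obtain ⟨n, hn⟩ := (hlarge.eventually hsmall).exists
    exact hiter n hn v
  exact measure_mono_null compl_closedSq_subset_iUnion_farFromSq
    (measure_iUnion_null fun n => hnull _ Nat.one_div_pos_of_nat)

end Support

/-! ### Words and cut sets -/

section Words

variable {V E : Type*} {S : BoxLikeGIFS V E} {p : E → ℝ} {μ : V → Measure (ℝ × ℝ)}

/-- The composition `ψ_w` of the maps of the edges of a word `w`. -/
noncomputable def wordMap (S : BoxLikeGIFS V E) : List E → ℝ × ℝ → ℝ × ℝ
  | [] => id
  | e :: w => S.map e ∘ wordMap S w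

/-- The weight `p_w^q c_w^x d_w^y` of a word, multiplicative when all the maps are diagonal. -/
noncomputable def wordWeight (S : BoxLikeGIFS V E) (p : E → ℝ) (q x y : ℝ) (w : List E) : ℝ :=
  wordProb p w ^ q * (S.wdims w).1 ^ x * (S.wdims w).2 ^ y

lemma wordProb_cons (p : E → ℝ) (e : E) (w : List E) : wordProb p (e :: w) = p e * wordProb p w :=
  List.prod_cons

lemma wordProb_pos (hp : ∀ e, 0 < p e) (w : List E) : 0 < wordProb p w :=
  List.prod_pos (by simpa using fun e _ => hp e)

lemma wdims_pos (S : BoxLikeGIFS V E) (w : List E) : 0 < (S.wdims w).1 ∧ 0 < (S.wdims w).2 := by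
  induction w with
  | nil => exact ⟨one_pos, one_pos⟩
  | cons e w ih =>
    unfold wdims
    split_ifs
    · exact ⟨mul_pos (S.a_pos e) ih.1, mul_pos (S.b_pos e) ih.2⟩
    · exact ⟨mul_pos (S.a_pos e) ih.2, mul_pos (S.b_pos e) ih.1⟩

lemma wdims_cons_of_diag {e : E} (he : S.diag e = true) (w : List E) :
    S.wdims (e :: w) = (S.a e * (S.wdims w).1, S.b e * (S.wdims w).2) :=
  if_pos he

lemma wordWeight_nil (S : BoxLikeGIFS V E) (p : E → ℝ) (q x y : ℝ) :
    S.wordWeight p q x y [] = 1 := by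
  simp [wordWeight, wordProb, wdims]

lemma wordWeight_cons (hp : ∀ e, 0 < p e) {e : E} (he : S.diag e = true) (q x y : ℝ)
    (w : List E) :
    S.wordWeight p q x y (e :: w) = S.edgeWeight p q x y e * S.wordWeight p q x y w := by
  have hpos := S.wdims_pos w
  simp only [wordWeight, edgeWeight, wordProb_cons, wdims_cons_of_diag he]
  rw [Real.mul_rpow (hp e).le (wordProb_pos hp w).le, Real.mul_rpow (S.a_pos e).le hpos.1.le,
    Real.mul_rpow (S.b_pos e).le hpos.2.le]
  ring

lemma wordWeight_nonneg (hp : ∀ e, 0 < p e) (q x y : ℝ) (w : List E) :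
    0 ≤ S.wordWeight p q x y w := by
  have hP := wordProb_pos hp w
  obtain ⟨hc, hd⟩ := S.wdims_pos w
  unfold wordWeight
  positivity

lemma isDiagAffine_map {e : E} (he : S.diag e = true) :
    IsDiagAffine (S.map e) (S.a e) (S.b e) := by
  refine ⟨(S.sa e * S.a e, S.sb e * S.b e), S.trans e, ?_, ?_, funext fun z => if_pos he⟩
  · rcases S.sa_mem e with h | h <;> simp [h, abs_of_pos (S.a_pos e)]
  · rcases S.sb_mem e with h | h <;> simp [h, abs_of_pos (S.b_pos e)]

lemma isDiagAffine_wordMap (hdiag : ∀ e, S.diag e = true) (w : List E) :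
    IsDiagAffine (S.wordMap w) (S.wdims w).1 (S.wdims w).2 := by
  induction w with
  | nil => exact isDiagAffine_id
  | cons e w ih =>
    rw [wdims_cons_of_diag (hdiag e)]
    exact (isDiagAffine_map (hdiag e)).comp ih

lemma continuous_wordMap (S : BoxLikeGIFS V E) (w : List E) : Continuous (S.wordMap w) := by
  induction w with
  | nil => exact continuous_id
  | cons e w ih => exact (S.continuous_map e).comp ih

lemma ROSC.image_wordMap_unitSq_subset (hROSC : S.ROSC) (w : List E) :
    S.wordMap w '' unitSq ⊆ unitSq := by
  induction w with
  | nil => exact (image_id _).subset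
  | cons e w ih =>
    rw [wordMap, image_comp]
    exact (image_mono ih).trans (hROSC.1 e)

variable [Fintype E]

/-- The words `e :: w` which start with an edge `e` following `e₀` and continue with `w ∈ W e`. -/
noncomputable def prependEdges (S : BoxLikeGIFS V E) (e₀ : E) (W : E → Finset (List E)) :
    Finset (List E) :=
  (Finset.univ.filter (S.init · = S.term e₀)).biUnion fun e => (W e).image (List.cons e)

/-- A cut set of the tree of paths following the edge `e₀`: every infinite path which follows `e₀`
has exactly one prefix in it. Indexing by a preceding edge rather than by a vertex gives the empty
word a last edge. -/
inductive IsCutSet (S : BoxLikeGIFS V E) : E → Finset (List E) → Prop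
  | nil (e₀ : E) : IsCutSet S e₀ {[]}
  | prependEdges (e₀ : E) {W : E → Finset (List E)} (hW : ∀ e, IsCutSet S e (W e)) :
      IsCutSet S e₀ (S.prependEdges e₀ W)

lemma mem_prependEdges {e₀ : E} {W : E → Finset (List E)} {u : List E} :
    u ∈ S.prependEdges e₀ W ↔ ∃ e, S.init e = S.term e₀ ∧ ∃ w ∈ W e, e :: w = u := by
  simp [prependEdges]

lemma sum_prependEdges {M : Type*} [AddCommMonoid M] (S : BoxLikeGIFS V E) (e₀ : E)
    (W : E → Finset (List E)) (g : List E → M) :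
    ∑ w ∈ S.prependEdges e₀ W, g w = ∑ e with S.init e = S.term e₀, ∑ w ∈ W e, g (e :: w) := by
  rw [prependEdges, Finset.sum_biUnion]
  · exact Finset.sum_congr rfl fun e _ => Finset.sum_image (List.cons_injective.injOn)
  · intro e _ e' _ he
    refine Finset.disjoint_left.2 fun u hu hu' => he ?_
    obtain ⟨w, -, rfl⟩ := Finset.mem_image.1 hu
    obtain ⟨w', -, hw⟩ := Finset.mem_image.1 hu'
    exact (List.cons_eq_cons.1 hw).1.symm

lemma Fmat_mulVec_apply (S : BoxLikeGIFS V E) (p : E → ℝ) (q x y : ℝ) (H : E → ℝ) (e₀ : E) :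
    (S.Fmat p q x y).mulVec H e₀ =
      ∑ e with S.init e = S.term e₀, S.edgeWeight p q x y e * H e := by
  simp only [Matrix.mulVec, dotProduct, Fmat_apply, ite_mul, zero_mul, Finset.sum_filter, eq_comm]

lemma sum_wordWeight_prependEdges (hdiag : ∀ e, S.diag e = true) (hp : ∀ e, 0 < p e)
    (q x y : ℝ) (H : E → ℝ) (e₀ : E) (W : E → Finset (List E)) :
    ∑ w ∈ S.prependEdges e₀ W, S.wordWeight p q x y w * H (w.getLastD e₀) =
      ∑ e with S.init e = S.term e₀, S.edgeWeight p q x y e *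
        ∑ w ∈ W e, S.wordWeight p q x y w * H (w.getLastD e) := by
  rw [sum_prependEdges]
  simp only [wordWeight_cons hp (hdiag _), List.getLastD_cons, mul_assoc, Finset.mul_sum]

namespace IsCutSet

variable {e₀ : E} {W : Finset (List E)}

lemma pairwiseDisjoint (hW : S.IsCutSet e₀ W) (hdiag : ∀ e, S.diag e = true)
    (hROSC : S.ROSC) : (W : Set (List E)).PairwiseDisjoint fun w => S.wordMap w '' unitSq := by
  induction hW with
  | nil => simp
  | @prependEdges e₀ W _ ih =>
    intro u hu u' hu' huu'
    obtain ⟨e, he, w, hw, rfl⟩ := mem_prependEdges.1 hu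
    obtain ⟨e', he', w', hw', rfl⟩ := mem_prependEdges.1 hu'
    simp only [Function.onFun, wordMap, image_comp]
    obtain rfl | hee' := eq_or_ne e e'
    · have hinj := (isDiagAffine_map (hdiag e)).injective (S.a_pos e) (S.b_pos e)
      exact (disjoint_image_iff hinj).2
        (ih e hw hw' fun h => huu' (congrArg (List.cons e) h))
    · exact (hROSC.2 e e' hee' (he.trans he'.symm)).mono
        (image_mono (hROSC.image_wordMap_unitSq_subset w))
        (image_mono (hROSC.image_wordMap_unitSq_subset w'))

lemma measureReal_eq_sum (hW : S.IsCutSet e₀ W) (hμ : S.IsGDMeasure p μ)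
    (hp : ∀ e, 0 < p e) {A : Set (ℝ × ℝ)} (hA : MeasurableSet A) :
    (μ (S.term e₀)).real A =
      ∑ w ∈ W, wordProb p w * (μ (S.term (w.getLastD e₀))).real (S.wordMap w ⁻¹' A) := by
  induction hW generalizing A with
  | nil => simp [wordProb, wordMap]
  | @prependEdges e₀ W _ ih =>
    rw [hμ.measureReal_eq_sum hp _ hA, sum_prependEdges]
    refine Finset.sum_congr rfl fun e _ => ?_
    rw [ih e (S.continuous_map e |>.measurable hA), Finset.mul_sum]
    refine Finset.sum_congr rfl fun w _ => ?_
    rw [wordProb_cons, List.getLastD_cons, wordMap, preimage_comp, mul_assoc]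

lemma sum_wordWeight_le (hW : S.IsCutSet e₀ W) (hdiag : ∀ e, S.diag e = true)
    (hp : ∀ e, 0 < p e) {q x y : ℝ} {H : E → ℝ} (hH : (S.Fmat p q x y).mulVec H ≤ H) :
    ∑ w ∈ W, S.wordWeight p q x y w * H (w.getLastD e₀) ≤ H e₀ := by
  induction hW with
  | nil => simp [wordWeight_nil]
  | @prependEdges e₀ W hW ih =>
    rw [sum_wordWeight_prependEdges hdiag hp]
    refine le_trans ?_ (hH e₀)
    rw [Fmat_mulVec_apply]
    exact Finset.sum_le_sum fun e _ =>
      mul_le_mul_of_nonneg_left (ih e) (edgeWeight_pos hp q x y e).le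

lemma le_sum_wordWeight (hW : S.IsCutSet e₀ W) (hdiag : ∀ e, S.diag e = true)
    (hp : ∀ e, 0 < p e) {q x y : ℝ} {H : E → ℝ} (hH : H ≤ (S.Fmat p q x y).mulVec H) :
    H e₀ ≤ ∑ w ∈ W, S.wordWeight p q x y w * H (w.getLastD e₀) := by
  induction hW with
  | nil => simp [wordWeight_nil]
  | @prependEdges e₀ W hW ih =>
    rw [sum_wordWeight_prependEdges hdiag hp]
    refine (hH e₀).trans ?_
    rw [Fmat_mulVec_apply]
    exact Finset.sum_le_sum fun e _ =>
      mul_le_mul_of_nonneg_left (ih e) (edgeWeight_pos hp q x y e).le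

end IsCutSet

lemma exists_isCutSet (hdiag : ∀ e, S.diag e = true) {r η δ : ℝ} (hr0 : 0 ≤ r) (hη : 0 < η)
    (hr : ∀ e, S.a e ≤ r ∧ S.b e ≤ r) (hηab : ∀ e, η ≤ S.a e ∧ η ≤ S.b e) (n : ℕ) (e₀ : E)
    {c d : ℝ} (hc : 0 < c) (hd : 0 < d) (hn : r ^ n * min c d ≤ δ) (hmin : η * δ ≤ min c d) :
    ∃ W, S.IsCutSet e₀ W ∧ ∀ w ∈ W, η * δ ≤ min (c * (S.wdims w).1) (d * (S.wdims w).2) ∧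
      min (c * (S.wdims w).1) (d * (S.wdims w).2) ≤ δ := by
  induction n generalizing e₀ c d with
  | zero => exact ⟨{[]}, .nil e₀, by simpa [wdims] using ⟨le_min_iff.1 hmin, by simpa using hn⟩⟩
  | succ n ih =>
    obtain hδ | hδ := le_or_gt (min c d) δ
    · exact ⟨{[]}, .nil e₀, by simpa [wdims] using ⟨le_min_iff.1 hmin, by simpa using hδ⟩⟩
    have : 0 < min c d := lt_min hc hd
    have hstep : ∀ e, ∃ W, S.IsCutSet e W ∧ ∀ w ∈ W,
        η * δ ≤ min (c * S.a e * (S.wdims w).1) (d * S.b e * (S.wdims w).2) ∧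
        min (c * S.a e * (S.wdims w).1) (d * S.b e * (S.wdims w).2) ≤ δ := by
      refine fun e => ih e (mul_pos hc (S.a_pos e)) (mul_pos hd (S.b_pos e)) ?_ ?_
      · refine le_trans ?_ hn
        rw [pow_succ, mul_assoc, mul_min_of_nonneg _ _ hr0, mul_comm r, mul_comm r]
        gcongr
        exacts [(hr e).1, (hr e).2]
      · calc η * δ ≤ min c d * η := by rw [mul_comm]; gcongr
          _ = min (c * η) (d * η) := min_mul_of_nonneg _ _ hη.le
          _ ≤ min (c * S.a e) (d * S.b e) := by gcongr; exacts [(hηab e).1, (hηab e).2]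
    choose W hW hWδ using hstep
    refine ⟨S.prependEdges e₀ W, .prependEdges e₀ hW, fun u hu => ?_⟩
    obtain ⟨e, -, w, hw, rfl⟩ := mem_prependEdges.1 hu
    simpa only [wdims_cons_of_diag (hdiag e), mul_assoc] using hWδ e w hw

theorem exists_isCutSet_isTiling (hdiag : ∀ e, S.diag e = true) (hROSC : S.ROSC)
    (hp : ∀ e, 0 < p e) (hμ : S.IsGDMeasure p μ) {η : ℝ} (hη : η ∈ Ioo (0 : ℝ) 1)
    (hηab : ∀ e, η ≤ S.a e ∧ η ≤ S.b e) {δ : ℝ} (hδ : δ ∈ Ioo (0 : ℝ) 1) (e₀ : E) :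
    ∃ W, S.IsCutSet e₀ W ∧ IsTiling (ι := W) (μ (S.term e₀)) (fun w => wordProb p w)
      (fun w => μ (S.term (w.1.getLastD e₀))) (fun w => S.wordMap w) (fun w => (S.wdims w).1)
      (fun w => (S.wdims w).2) η δ := by
  obtain ⟨r, hr01, hr⟩ := S.exists_ratios_le
  obtain ⟨n, hn⟩ := exists_pow_lt_of_lt_one hδ.1 hr01.2
  obtain ⟨W, hW, hWδ⟩ := exists_isCutSet (c := 1) (d := 1) hdiag hr01.1.le hη.1 hr hηab n e₀
    one_pos one_pos (by simpa using hn.le) (by simpa using mul_le_one₀ hη.2.le hδ.1.le hδ.2.le)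
  simp only [one_mul] at hWδ
  exact ⟨W, hW,
    { weight_pos := fun w => wordProb_pos hp w
      width_pos := fun w => (S.wdims_pos w).1
      height_pos := fun w => (S.wdims_pos w).2
      isDiagAffine := fun w => isDiagAffine_wordMap hdiag w
      mapsTo_closedSq := fun w =>
        mapsTo_closedSq (S.continuous_wordMap w) (hROSC.image_wordMap_unitSq_subset w)
      disjoint := fun w w' hne =>
        hW.pairwiseDisjoint hdiag hROSC w.2 w'.2 fun h => hne (Subtype.ext h)
      le_min := fun w => (hWδ w w.2).1
      min_le := fun w => (hWδ w w.2).2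
      real_eq := fun A hA => by
        rw [hW.measureReal_eq_sum hμ hp hA, ← Finset.sum_coe_sort] }⟩

end Words

end BoxLikeGIFS

/-! ### Moments of thin rectangles -/

section ThinRectangle

variable {c d δ η g r s t : ℝ}

lemma div_rpow_neg_eq (hc : 0 < c) (hd : 0 < d) (s t : ℝ) :
    (d / c) ^ (-s) = d ^ (-(s + t)) * (c ^ s * d ^ t) := by
  rw [Real.div_rpow hd.le hc.le, Real.rpow_neg hc.le, div_inv_eq_mul, mul_left_comm,
    ← Real.rpow_add hd, neg_add, neg_add_cancel_right, mul_comm]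

lemma rpow_neg_le_of_mul_le (hη : 0 < η) (hδ : 0 < δ) (hδ1 : δ ≤ 1) (hd : η * δ ≤ d)
    (hdδ : d ≤ δ) (hr : r ≤ g) : d ^ (-r) ≤ η ^ (-|g|) * δ ^ (-g) := by
  have hd0 : 0 < d := (mul_pos hη hδ).trans_le hd
  calc d ^ (-r) ≤ d ^ (-g) :=
        Real.rpow_le_rpow_of_exponent_ge hd0 (hdδ.trans hδ1) (neg_le_neg hr)
    _ = (d / δ) ^ (-g) * δ ^ (-g) := by
        rw [← Real.mul_rpow (by positivity) hδ.le, div_mul_cancel₀ _ hδ.ne']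
    _ ≤ η ^ (-|g|) * δ ^ (-g) := by
        rw [← abs_neg]
        gcongr
        exact rpow_le_rpow_neg_abs hη ((le_div_iff₀ hδ).2 hd) ((div_le_one hδ).2 hdδ)

lemma le_rpow_neg_of_mul_le (hη : 0 < η) (hδ : 0 < δ) (hd : η * δ ≤ d) (hdδ : d ≤ δ) :
    η ^ |g| * δ ^ (-g) ≤ d ^ (-g) := by
  have hd0 : 0 < d := (mul_pos hη hδ).trans_le hd
  calc η ^ |g| * δ ^ (-g) ≤ (d / δ) ^ (-g) * δ ^ (-g) := by
        rw [← abs_neg]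
        gcongr
        exact rpow_abs_le_rpow hη ((le_div_iff₀ hδ).2 hd) ((div_le_one hδ).2 hdδ)
    _ = d ^ (-g) := by rw [← Real.mul_rpow (by positivity) hδ.le, div_mul_cancel₀ _ hδ.ne']

lemma div_rpow_neg_le (hη : 0 < η) (hδ : 0 < δ) (hδ1 : δ ≤ 1) (hc : 0 < c) (hd : η * δ ≤ d)
    (hdδ : d ≤ δ) (hst : s + t ≤ g) :
    (d / c) ^ (-s) ≤ η ^ (-|g|) * δ ^ (-g) * (c ^ s * d ^ t) := by
  have hd0 : 0 < d := (mul_pos hη hδ).trans_le hd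
  rw [div_rpow_neg_eq hc hd0 s t]
  gcongr
  exact rpow_neg_le_of_mul_le hη hδ hδ1 hd hdδ hst

lemma le_div_rpow_neg (hη : 0 < η) (hδ : 0 < δ) (hdc : d ≤ c) (hd : η * δ ≤ d) (hdδ : d ≤ δ)
    (hrs : r ≤ s) : η ^ |r + t| * δ ^ (-(r + t)) * (c ^ r * d ^ t) ≤ (d / c) ^ (-s) := by
  have hd0 : 0 < d := (mul_pos hη hδ).trans_le hd
  have hc : 0 < c := hd0.trans_le hdc
  calc η ^ |r + t| * δ ^ (-(r + t)) * (c ^ r * d ^ t)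
      ≤ d ^ (-(r + t)) * (c ^ r * d ^ t) := by
        gcongr
        exact le_rpow_neg_of_mul_le hη hδ hd hdδ
    _ = (d / c) ^ (-r) := (div_rpow_neg_eq hc hd0 r t).symm
    _ ≤ (d / c) ^ (-s) := Real.rpow_le_rpow_of_exponent_ge (by positivity)
        ((div_le_one hc).2 hdc) (neg_le_neg hrs)

variable {m : Measure (ℝ × ℝ)} {C q s₁ s₂ t₁ t₂ x y : ℝ}

lemma projMoment_of_le (hdc : d ≤ c) : projMoment m c d q = Dq1 (m.map Prod.fst) (d / c) q := by
  rw [projMoment, longCoord, if_pos hdc, aspectRatio, min_eq_right hdc, max_eq_left hdc]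

lemma projMoment_of_lt (hcd : c < d) : projMoment m c d q = Dq1 (m.map Prod.snd) (c / d) q := by
  rw [projMoment, longCoord, if_neg hcd.not_ge, aspectRatio, min_eq_left hcd.le,
    max_eq_right hcd.le]

lemma projMoment_le (hη : 0 < η) (hδ : 0 < δ) (hδ1 : δ ≤ 1) (hC : 0 ≤ C)
    (hmin : η * δ ≤ min c d) (hminδ : min c d ≤ δ) (h₁ : s₁ + t₁ ≤ g) (h₂ : s₂ + t₂ ≤ g)
    (hfst : ∀ s ∈ Ioc (0 : ℝ) 1, Dq1 (m.map Prod.fst) s q ≤ C * s ^ (-s₁))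
    (hsnd : ∀ s ∈ Ioc (0 : ℝ) 1, Dq1 (m.map Prod.snd) s q ≤ C * s ^ (-s₂)) :
    projMoment m c d q ≤ C * η ^ (-|g|) * δ ^ (-g) * (c ^ s₁ * d ^ t₁ + c ^ t₂ * d ^ s₂) := by
  have hηδ : 0 < η * δ := mul_pos hη hδ
  have hc : 0 < c := hηδ.trans_le (hmin.trans (min_le_left c d))
  have hd : 0 < d := hηδ.trans_le (hmin.trans (min_le_right c d))
  simp only [mul_assoc C]
  rcases le_or_gt d c with hdc | hcd
  · rw [min_eq_right hdc] at hmin hminδ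
    rw [projMoment_of_le hdc]
    refine (hfst _ ⟨by positivity, (div_le_one hc).2 hdc⟩).trans ?_
    gcongr
    refine (div_rpow_neg_le hη hδ hδ1 hc hmin hminδ h₁).trans ?_
    gcongr
    exact le_add_of_nonneg_right (by positivity)
  · rw [min_eq_left hcd.le] at hmin hminδ
    rw [projMoment_of_lt hcd]
    refine (hsnd _ ⟨by positivity, (div_le_one hd).2 hcd.le⟩).trans ?_
    gcongr
    refine (div_rpow_neg_le hη hδ hδ1 hd hmin hminδ h₂).trans ?_
    gcongr
    rw [mul_comm (d ^ s₂)]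
    exact le_add_of_nonneg_left (by positivity)

lemma le_projMoment (hη : 0 < η) (hδ : 0 < δ) (hmin : η * δ ≤ min c d) (hminδ : min c d ≤ δ)
    (hx : x ≤ s₁) (hy : y ≤ s₂)
    (hfst : ∀ s ∈ Ioc (0 : ℝ) 1, s ^ (-s₁) ≤ C * Dq1 (m.map Prod.fst) s q)
    (hsnd : ∀ s ∈ Ioc (0 : ℝ) 1, s ^ (-s₂) ≤ C * Dq1 (m.map Prod.snd) s q) :
    η ^ |x + y| * δ ^ (-(x + y)) * (c ^ x * d ^ y) ≤ C * projMoment m c d q := by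
  have hηδ : 0 < η * δ := mul_pos hη hδ
  have hc : 0 < c := hηδ.trans_le (hmin.trans (min_le_left c d))
  have hd : 0 < d := hηδ.trans_le (hmin.trans (min_le_right c d))
  rcases le_or_gt d c with hdc | hcd
  · rw [min_eq_right hdc] at hmin hminδ
    rw [projMoment_of_le hdc]
    exact (le_div_rpow_neg hη hδ hdc hmin hminδ hx).trans
      (hfst _ ⟨by positivity, (div_le_one hc).2 hdc⟩)
  · rw [min_eq_left hcd.le] at hmin hminδ
    rw [projMoment_of_lt hcd, add_comm, mul_comm (c ^ x)]
    exact (le_div_rpow_neg hη hδ hcd.le hmin hminδ hy).trans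
      (hsnd _ ⟨by positivity, (div_le_one hd).2 hcd.le⟩)

end ThinRectangle

namespace IsTiling

variable {ι : Type*} [Fintype ι] {ν : Measure (ℝ × ℝ)} [IsFiniteMeasure ν] {P : ι → ℝ}
  {m : ι → Measure (ℝ × ℝ)} [∀ i, IsFiniteMeasure (m i)] {f : ι → ℝ × ℝ → ℝ × ℝ}
  {c d : ι → ℝ} {η δ q C g s₁ t₁ s₂ t₂ x y : ℝ}

lemma Dq2_le_sum_rpow (h : IsTiling ν P m f c d η δ) (hν : ν closedSqᶜ = 0)
    (hm : ∀ i, m i closedSqᶜ = 0) (hη : 0 < η) (hδ : 0 < δ) (hδ1 : δ ≤ 1) (hq : 0 ≤ q)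
    (hC : 0 ≤ C) (h₁ : s₁ + t₁ ≤ g) (h₂ : s₂ + t₂ ≤ g)
    (hfst : ∀ i, ∀ s ∈ Ioc (0 : ℝ) 1, Dq1 ((m i).map Prod.fst) s q ≤ C * s ^ (-s₁))
    (hsnd : ∀ i, ∀ s ∈ Ioc (0 : ℝ) 1, Dq1 ((m i).map Prod.snd) s q ≤ C * s ^ (-s₂)) :
    Dq2 ν δ q ≤ ((2 / η + 5) ^ 2 * (1 / η + 2)) ^ q * 9 * (C * η ^ (-|g|) * δ ^ (-g)) *
      (∑ i, P i ^ q * c i ^ s₁ * d i ^ t₁ + ∑ i, P i ^ q * c i ^ t₂ * d i ^ s₂) := by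
  refine (h.Dq2_le hν hm hη hδ hq).trans ?_
  rw [mul_assoc _ (C * _ * _), ← Finset.sum_add_distrib, Finset.mul_sum _ _ (C * _ * _)]
  refine mul_le_mul_of_nonneg_left (Finset.sum_le_sum fun i _ => ?_) (by positivity)
  have hP : 0 ≤ P i ^ q := Real.rpow_nonneg (h.weight_pos i).le q
  calc P i ^ q * projMoment (m i) (c i) (d i) q
      ≤ P i ^ q * (C * η ^ (-|g|) * δ ^ (-g) *
          (c i ^ s₁ * d i ^ t₁ + c i ^ t₂ * d i ^ s₂)) := by
        gcongr
        exact projMoment_le hη hδ hδ1 hC (h.le_min i) (h.min_le i) h₁ h₂ (hfst i) (hsnd i)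
    _ = _ := by ring

lemma sum_rpow_le_Dq2 (h : IsTiling ν P m f c d η δ) (hν : ν closedSqᶜ = 0)
    (hm : ∀ i, m i closedSqᶜ = 0) (hη : 0 < η) (hδ : 0 < δ) (hq : 0 ≤ q) (hC : 0 ≤ C)
    (hx : x ≤ s₁) (hy : y ≤ s₂)
    (hfst : ∀ i, ∀ s ∈ Ioc (0 : ℝ) 1, s ^ (-s₁) ≤ C * Dq1 ((m i).map Prod.fst) s q)
    (hsnd : ∀ i, ∀ s ∈ Ioc (0 : ℝ) 1, s ^ (-s₂) ≤ C * Dq1 ((m i).map Prod.snd) s q) :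
    η ^ |x + y| * δ ^ (-(x + y)) * ∑ i, P i ^ q * c i ^ x * d i ^ y ≤
      C * (9 ^ q * ((2 / η + 5) ^ 2 * (1 / η + 2))) * Dq2 ν δ q := by
  rw [mul_assoc C]
  refine le_trans ?_ (mul_le_mul_of_nonneg_left (h.sum_projMoment_le hν hm hη hδ hq) hC)
  rw [Finset.mul_sum, Finset.mul_sum]
  refine Finset.sum_le_sum fun i _ => ?_
  have hP : 0 ≤ P i ^ q := Real.rpow_nonneg (h.weight_pos i).le q
  calc η ^ |x + y| * δ ^ (-(x + y)) * (P i ^ q * c i ^ x * d i ^ y)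
      = P i ^ q * (η ^ |x + y| * δ ^ (-(x + y)) * (c i ^ x * d i ^ y)) := by ring
    _ ≤ P i ^ q * (C * projMoment (m i) (c i) (d i) q) := mul_le_mul_of_nonneg_left
        (le_projMoment hη hδ (h.le_min i) (h.min_le i) hx hy (hfst i) (hsnd i)) hP
    _ = C * (P i ^ q * projMoment (m i) (c i) (d i) q) := by ring

end IsTiling

namespace BoxLikeGIFS

/-! ### Growth of the moment sums -/

section Growth

variable {V E : Type*} {S : BoxLikeGIFS V E} {p : E → ℝ} {q x y ε : ℝ}

lemma sum_coe_eq_sum_wordWeight (W : Finset (List E)) :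
    ∑ w : W, wordProb p w.1 ^ q * (S.wdims w).1 ^ x * (S.wdims w).2 ^ y =
      ∑ w ∈ W, S.wordWeight p q x y w :=
  Finset.sum_coe_sort W (S.wordWeight p q x y)

variable [Fintype E]

lemma exists_sum_wordWeight_le (hdiag : ∀ e, S.diag e = true) (hp : ∀ e, 0 < p e)
    (hρ : specRad (S.Fmat p q x y) = 1) (hε : 0 < ε) :
    ∃ C > 0, ∀ e₀ W, S.IsCutSet e₀ W → ∑ w ∈ W, S.wordWeight p q (x + ε) (y + ε) w ≤ C := by
  obtain ⟨H, hH1, hH⟩ := exists_mulVec_le_self (Fmat_nonneg hp q (x + ε) (y + ε))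
    (specRad_Fmat_add_lt_one hp hρ hε)
  obtain ⟨C, hHC, hC⟩ := ((eventually_all.2 fun e => eventually_ge_atTop (H e)).and
    (eventually_gt_atTop 0)).exists
  refine ⟨C, hC, fun e₀ W hW => ?_⟩
  calc ∑ w ∈ W, S.wordWeight p q (x + ε) (y + ε) w
      ≤ ∑ w ∈ W, S.wordWeight p q (x + ε) (y + ε) w * H (w.getLastD e₀) :=
        Finset.sum_le_sum fun w _ =>
          le_mul_of_one_le_right (wordWeight_nonneg hp q _ _ w) (hH1 _)
    _ ≤ H e₀ := hW.sum_wordWeight_le hdiag hp hH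
    _ ≤ C := hHC e₀

lemma exists_one_le_mul_sum_wordWeight (hSC : S.StronglyConnected)
    (hdiag : ∀ e, S.diag e = true) (hp : ∀ e, 0 < p e)
    (hρ : specRad (S.Fmat p q x y) = 1) (hε : 0 < ε) :
    ∃ C > 0, ∀ e₀ W, S.IsCutSet e₀ W → 1 ≤ C * ∑ w ∈ W, S.wordWeight p q (x - ε) (y - ε) w := by
  obtain ⟨H, hH1, hH⟩ := exists_le_mulVec_self (hSC.isIrreducible_Fmat hp q (x - ε) (y - ε))
    (one_lt_specRad_Fmat_sub hp hρ hε)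
  obtain ⟨C, hHC, hC⟩ := ((eventually_all.2 fun e => eventually_ge_atTop (H e)).and
    (eventually_gt_atTop 0)).exists
  refine ⟨C, hC, fun e₀ W hW => ?_⟩
  calc 1 ≤ H e₀ := hH1 e₀
    _ ≤ ∑ w ∈ W, S.wordWeight p q (x - ε) (y - ε) w * H (w.getLastD e₀) :=
        hW.le_sum_wordWeight hdiag hp hH
    _ ≤ C * ∑ w ∈ W, S.wordWeight p q (x - ε) (y - ε) w := by
        rw [mul_comm C, Finset.sum_mul]
        exact Finset.sum_le_sum fun w _ =>
          mul_le_mul_of_nonneg_left (hHC _) (wordWeight_nonneg hp q _ _ w)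

variable {μ : V → Measure (ℝ × ℝ)} [Finite V] {τA τB γA γB : ℝ}

lemma IsGDMeasure.eventually_Dq1_map_bounds (hμ : S.IsGDMeasure p μ) (hp : S.IsWeights p)
    (hROSC : S.ROSC) (hq : 0 ≤ q) {π : ℝ × ℝ → ℝ} (hπ : Measurable π)
    (hmaps : MapsTo π closedSq (Icc 0 1)) {τ : ℝ} (hτ : ∀ v, HasLq1 ((μ v).map π) q τ)
    (hε : 0 < ε) :
    ∀ᶠ C : ℝ in atTop, ∀ v, ∀ s ∈ Ioc (0 : ℝ) 1,
      s ^ (-τ + ε) ≤ C * Dq1 ((μ v).map π) s q ∧ Dq1 ((μ v).map π) s q ≤ C * s ^ (-τ - ε) := by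
  refine eventually_all.2 fun v => ?_
  have := hμ.1 v
  have := Measure.isProbabilityMeasure_map (μ := μ v) hπ.aemeasurable
  exact (hτ v).eventually_bounds
    (map_compl_Icc_of_mapsTo hπ hmaps (hμ.measure_compl_closedSq hp hROSC v)) hq hε

lemma IsGDMeasure.exists_Dq1_bounds (hμ : S.IsGDMeasure p μ) (hp : S.IsWeights p)
    (hROSC : S.ROSC) (hq : 0 ≤ q) (hA : ∀ v, HasLq1 ((μ v).map Prod.fst) q τA)
    (hB : ∀ v, HasLq1 ((μ v).map Prod.snd) q τB) (hε : 0 < ε) :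
    ∃ C > 0, ∀ v, ∀ s ∈ Ioc (0 : ℝ) 1,
      (s ^ (-(τA - ε)) ≤ C * Dq1 ((μ v).map Prod.fst) s q ∧
        Dq1 ((μ v).map Prod.fst) s q ≤ C * s ^ (-(τA + ε))) ∧
      (s ^ (-(τB - ε)) ≤ C * Dq1 ((μ v).map Prod.snd) s q ∧
        Dq1 ((μ v).map Prod.snd) s q ≤ C * s ^ (-(τB + ε))) := by
  obtain ⟨C, hC, hfst, hsnd⟩ := ((eventually_gt_atTop 0).and
    ((hμ.eventually_Dq1_map_bounds hp hROSC hq measurable_fst (fun _ hz => hz.1) hA hε).and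
      (hμ.eventually_Dq1_map_bounds hp hROSC hq measurable_snd (fun _ hz => hz.2) hB hε))).exists
  refine ⟨C, hC, fun v s hs => ?_⟩
  simp only [neg_sub', neg_add', sub_neg_eq_add]
  exact ⟨hfst v s hs, hsnd v s hs⟩

theorem exists_Dq2_le (hROSC : S.ROSC) (hdiag : ∀ e, S.diag e = true) (hp : S.IsWeights p)
    (hμ : S.IsGDMeasure p μ) (hq : 0 ≤ q) (hA : ∀ v, HasLq1 ((μ v).map Prod.fst) q τA)
    (hB : ∀ v, HasLq1 ((μ v).map Prod.snd) q τB)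
    (hγA : specRad (S.Fmat p q τA (γA - τA)) = 1) (hγB : specRad (S.Fmat p q (γB - τB) τB) = 1)
    (hε : 0 < ε) :
    ∃ C > 0, ∀ δ ∈ Ioo (0 : ℝ) 1, ∀ e₀,
      Dq2 (μ (S.term e₀)) δ q ≤ C * δ ^ (-max γA γB - ε) := by
  have := hμ.1
  have hsupp := hμ.measure_compl_closedSq hp hROSC
  obtain ⟨η, hη, hηab⟩ := S.exists_le_ratios
  obtain ⟨C, hC, hproj⟩ := hμ.exists_Dq1_bounds hp hROSC hq hA hB (half_pos hε)
  obtain ⟨KA, hKA, hsumA⟩ := exists_sum_wordWeight_le hdiag hp.1 hγA (half_pos hε)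
  obtain ⟨KB, hKB, hsumB⟩ := exists_sum_wordWeight_le hdiag hp.1 hγB (half_pos hε)
  set g := max γA γB + ε with hg
  set M := ((2 / η + 5) ^ 2 * (1 / η + 2)) ^ q * 9
  have hη0 : 0 < η := hη.1
  refine ⟨M * (C * η ^ (-|g|)) * (KA + KB), by positivity, fun δ hδ e₀ => ?_⟩
  have hδ0 : 0 < δ := hδ.1
  obtain ⟨W, hW, htiling⟩ := exists_isCutSet_isTiling hdiag hROSC hp.1 hμ hη hηab hδ e₀
  have hbound := htiling.Dq2_le_sum_rpow (hsupp _) (fun _ => hsupp _) hη0 hδ0 hδ.2.le hq hC.le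
    (s₁ := τA + ε / 2) (t₁ := γA - τA + ε / 2) (s₂ := τB + ε / 2) (t₂ := γB - τB + ε / 2) (g := g)
    (by linarith [le_max_left γA γB]) (by linarith [le_max_right γA γB])
    (fun _ s hs => (hproj _ s hs).1.2) (fun _ s hs => (hproj _ s hs).2.2)
  rw [sum_coe_eq_sum_wordWeight, sum_coe_eq_sum_wordWeight] at hbound
  calc Dq2 (μ (S.term e₀)) δ q ≤ M * (C * η ^ (-|g|) * δ ^ (-g)) * (KA + KB) :=
        hbound.trans (by gcongr; exacts [hsumA e₀ W hW, hsumB e₀ W hW])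
    _ = M * (C * η ^ (-|g|)) * (KA + KB) * δ ^ (-max γA γB - ε) := by
        rw [hg, neg_add']
        ring

theorem exists_le_Dq2 (hSC : S.StronglyConnected) (hROSC : S.ROSC)
    (hdiag : ∀ e, S.diag e = true) (hp : S.IsWeights p) (hμ : S.IsGDMeasure p μ) (hq : 0 ≤ q)
    (hA : ∀ v, HasLq1 ((μ v).map Prod.fst) q τA) (hB : ∀ v, HasLq1 ((μ v).map Prod.snd) q τB)
    (hρ : specRad (S.Fmat p q x y) = 1) (hx : x ≤ τA) (hy : y ≤ τB) (hε : 0 < ε) :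
    ∃ C > 0, ∀ δ ∈ Ioo (0 : ℝ) 1, ∀ e₀, δ ^ (-(x + y) + ε) ≤ C * Dq2 (μ (S.term e₀)) δ q := by
  have := hμ.1
  have hsupp := hμ.measure_compl_closedSq hp hROSC
  obtain ⟨η, hη, hηab⟩ := S.exists_le_ratios
  obtain ⟨C, hC, hproj⟩ := hμ.exists_Dq1_bounds hp hROSC hq hA hB (half_pos hε)
  obtain ⟨K, hK, hsum⟩ := exists_one_le_mul_sum_wordWeight hSC hdiag hp.1 hρ (half_pos hε)
  set x' := x - ε / 2 with hx'
  set y' := y - ε / 2 with hy'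
  set M := C * (9 ^ q * ((2 / η + 5) ^ 2 * (1 / η + 2)))
  have hη0 : 0 < η := hη.1
  refine ⟨η ^ (-|x' + y'|) * K * M, by positivity, fun δ hδ e₀ => ?_⟩
  have hδ0 : 0 < δ := hδ.1
  obtain ⟨W, hW, htiling⟩ := exists_isCutSet_isTiling hdiag hROSC hp.1 hμ hη hηab hδ e₀
  have hbound := htiling.sum_rpow_le_Dq2 (x := x') (y := y') (hsupp _) (fun _ => hsupp _)
    hη0 hδ0 hq hC.le (sub_le_sub_right hx _) (sub_le_sub_right hy _)
    (fun _ s hs => (hproj _ s hs).1.1) (fun _ s hs => (hproj _ s hs).2.1)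
  rw [sum_coe_eq_sum_wordWeight] at hbound
  calc δ ^ (-(x + y) + ε) = δ ^ (-(x' + y')) * 1 := by
        rw [mul_one, hx', hy']
        ring_nf
    _ ≤ δ ^ (-(x' + y')) * (K * ∑ w ∈ W, S.wordWeight p q x' y' w) := by
        gcongr
        exact hsum e₀ W hW
    _ = η ^ (-|x' + y'|) * K *
          (η ^ |x' + y'| * δ ^ (-(x' + y')) * ∑ w ∈ W, S.wordWeight p q x' y' w) := by
        rw [Real.rpow_neg hη0.le]
        have := Real.rpow_pos_of_pos hη0 |x' + y'|
        field_simp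
    _ ≤ η ^ (-|x' + y'|) * K * (M * Dq2 (μ (S.term e₀)) δ q) := by gcongr
    _ = _ := by ring

theorem hasLq2_max (hSC : S.StronglyConnected) (hROSC : S.ROSC) (hdiag : ∀ e, S.diag e = true)
    (hp : S.IsWeights p) (hμ : S.IsGDMeasure p μ) (hq : 0 ≤ q)
    (hA : ∀ v, HasLq1 ((μ v).map Prod.fst) q τA) (hB : ∀ v, HasLq1 ((μ v).map Prod.snd) q τB)
    (hγA : specRad (S.Fmat p q τA (γA - τA)) = 1) (hγB : specRad (S.Fmat p q (γB - τB) τB) = 1)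
    (hcase : max γA γB ≤ τA + τB) (v : V) : HasLq2 (μ v) q (max γA γB) := by
  obtain ⟨e₀, rfl⟩ := hSC.exists_term_eq v
  obtain ⟨x, y, hρ, hx, hy, hxy⟩ : ∃ x y, specRad (S.Fmat p q x y) = 1 ∧
      x ≤ τA ∧ y ≤ τB ∧ x + y = max γA γB := by
    rcases max_choice γA γB with h | h <;> rw [h] at hcase ⊢
    · exact ⟨_, _, hγA, le_rfl, by linarith, by ring⟩
    · exact ⟨_, _, hγB, by linarith, le_rfl, by ring⟩
  refine tendsto_log_div_of_rpow_bounds (fun ε hε => ?_) fun ε hε => ?_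
  · obtain ⟨C, hC, h⟩ := exists_le_Dq2 hSC hROSC hdiag hp hμ hq hA hB hρ hx hy hε
    rw [hxy] at h
    exact ⟨C, hC, fun δ hδ => h δ hδ e₀⟩
  · obtain ⟨C, hC, h⟩ := exists_Dq2_le hROSC hdiag hp hμ hq hA hB hγA hγB hε
    exact ⟨C, hC, fun δ hδ => h δ hδ e₀⟩

end Growth

end BoxLikeGIFS

end LqGIFS

/-- closed form, non-rotational, case (a).  All `T_e` diagonal, ROSC,
`q ≥ 0`, and `max{γ_A(q), γ_B(q)} ≤ t(q)`.  Then every `τ_{μ_v}(q)` exists and equals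
`max{γ_A(q), γ_B(q)}`, which is also the maximum of `x + y` over pairs with
`ρ(F^{(q)}_{x,y}) = 1` in either of the stated ranges. -/
theorem statement2
    {V E : Type} [Fintype V] [Fintype E] [Nonempty V]
    (S : BoxLikeGIFS V E) (hSC : S.StronglyConnected) (hROSC : S.ROSC)
    (hdiag : ∀ e : E, S.diag e = true)
    (p : E → ℝ) (hp : S.IsWeights p)
    (μ : V → Measure (ℝ × ℝ)) (hμ : S.IsGDMeasure p μ)
    (τA τB : ℝ → ℝ)
    (hτA : ∀ q : ℝ, 0 ≤ q → ∀ v : V, HasLq1 ((μ v).map Prod.fst) q (τA q))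
    (hτB : ∀ q : ℝ, 0 ≤ q → ∀ v : V, HasLq1 ((μ v).map Prod.snd) q (τB q))
    (q : ℝ) (hq : 0 ≤ q)
    (γA γB : ℝ)
    (hγA : specRad (S.Fmat p q (τA q) (γA - τA q)) = 1)
    (hγB : specRad (S.Fmat p q (γB - τB q) (τB q)) = 1)
    (hcase : max γA γB ≤ τA q + τB q) :
    (∀ v : V, HasLq2 (μ v) q (max γA γB)) ∧
    IsGreatest {s : ℝ | ∃ x y : ℝ, specRad (S.Fmat p q x y) = 1 ∧
      γB - τB q ≤ x ∧ x ≤ τA q ∧ s = x + y} (max γA γB) ∧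
    IsGreatest {s : ℝ | ∃ x y : ℝ, specRad (S.Fmat p q x y) = 1 ∧
      γA - τA q ≤ y ∧ y ≤ τB q ∧ s = x + y} (max γA γB) := by
  refine ⟨BoxLikeGIFS.hasLq2_max hSC hROSC hdiag hp hμ hq (hτA q hq) (hτB q hq) hγA hγB hcase,
    ?_, ?_⟩
  · simpa [max_comm] using
      BoxLikeGIFS.isGreatest_add_of_fst_mem_Icc hp.1 hγB hγA (by linarith [le_max_right γA γB])
  · simpa using
      BoxLikeGIFS.isGreatest_add_of_snd_mem_Icc hp.1 hγA hγB (by linarith [le_max_left γA γB])
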